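/- (Theorem 1.3(i): sharp two-sided bounds for the extinction time in the good fast diffusion range.) Let d ≥ 3 and m_c < m < 1, where m_c = (d−2)/d. There exist positive constants c₁ and c₂ depending only on m and d such that: if u solves the homogeneous Dirichlet problem for the FDE ∂ₜu = Δ(u^m) on a ball B_R(x₀) ⊂ ℝ^d with nonnegative initial data u₀ ∈ L¹(B_R(x₀)), u₀ not identically zero, and extinction time T, then c₁ ‖u₀‖_{L¹(B_{R/3}(x₀))}^{1−m} R^{2−d(1−m)} ≤ T ≤ c₂ ‖u₀‖_{L¹(B_R(x₀))}^{1−m} R^{2−d(1−m)}. -/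

import Mathlib

open MeasureTheory Metric Set Real

/-- The spatial Laplacian of `f : ℝ^d → ℝ` at a point, as the sum of second
coordinate derivatives. -/
noncomputable def spaceLap {d : ℕ} (f : EuclideanSpace ℝ (Fin d) → ℝ)
    (x : EuclideanSpace ℝ (Fin d)) : ℝ :=
  ∑ i : Fin d, fderiv ℝ (fun y => fderiv ℝ f y (EuclideanSpace.single i 1)) x
    (EuclideanSpace.single i 1)

/-- `u` is a classical solution of the fast diffusion equation `∂ₜ u = Δ(u^m)`
on the space-time set `Q`: it is positive and smooth on `Q` and satisfies the
equation pointwise on `Q`. -/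
def IsFDESol {d : ℕ} (m : ℝ) (Q : Set (ℝ × EuclideanSpace ℝ (Fin d)))
    (u : ℝ → EuclideanSpace ℝ (Fin d) → ℝ) : Prop :=
  (∀ p ∈ Q, 0 < u p.1 p.2) ∧
  ContDiffOn ℝ (⊤ : ℕ∞) (fun p : ℝ × EuclideanSpace ℝ (Fin d) => u p.1 p.2) Q ∧
  ∀ p ∈ Q, deriv (fun s => u s p.2) p.1 = spaceLap (fun y => u p.1 y ^ m) p.2

/-- `u` solves the homogeneous Dirichlet problem for the FDE `∂ₜ u = Δ(u^m)` on the
ball `B_ρ(x₀)` with initial data `u₀` and extinction time `T`. -/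
def IsDirichletSol {d : ℕ} (m : ℝ) (x₀ : EuclideanSpace ℝ (Fin d)) (ρ T : ℝ)
    (u : ℝ → EuclideanSpace ℝ (Fin d) → ℝ) (u₀ : EuclideanSpace ℝ (Fin d) → ℝ) : Prop :=
  (∀ t ∈ Icc 0 T, ∀ x ∈ closedBall x₀ ρ, 0 ≤ u t x) ∧
  ContinuousOn (fun p : ℝ × EuclideanSpace ℝ (Fin d) => u p.1 p.2)
    (Icc 0 T ×ˢ closedBall x₀ ρ) ∧
  IsFDESol m (Ioo 0 T ×ˢ ball x₀ ρ) u ∧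
  (∀ x ∈ ball x₀ ρ, u 0 x = u₀ x) ∧
  (∀ t ∈ Ioc 0 T, ∀ x ∈ sphere x₀ ρ, u t x = 0) ∧
  (∀ x ∈ closedBall x₀ ρ, u T x = 0) ∧
  ∀ t ∈ Ioo 0 T, ∃ x ∈ ball x₀ ρ, u t x ≠ 0

/-!
Extend the solution `u` by zero to `U`. Testing the equation against `φ`, after a convex truncation
of `u ^ m` near the boundary, gives `∫ U(t) φ - ∫ U(s) φ ≤ ∫ₛᵗ ∫ U ^ m Δφ` for every `C²` function
`φ ≥ 0`, and for `φ` of either sign supported inside the domain.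

Lower bound. Let `φ ≥ 0` be a power of a bump function on the ball, high enough that
`|Δφ| ≤ C φ ^ m`. Testing with `-φ` from the time at which `∫ U φ` is maximal until extinction and
using Hölder's inequality for `∫ (U φ) ^ m` bounds `(∫ U(0) φ) ^ (1 - m)` by a multiple of `T`.

Upper bound. Testing with regularised Newtonian kernels shows that the Newtonian energy
dissipates at a rate at least `c ∫ U ^ (1 + m)`, so that with `M = ∫ U` the tail
`G(t) = ∫ₜᵀ ∫ U ^ (1 + m)` satisfies `G ≤ C M ^ (2 / d) ∫ U ^ (2 - 2 / d)`. Interpolating the last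
integral between `M` and `-G' = ∫ U ^ (1 + m)` gives `-G' ≥ (G / A) ^ α` with
`α = m / (1 - 2 / d)`, and `α > 1` is exactly the condition `m > (d - 2) / d`. Estimating `M` by
`-G'` and the volume as well gives `-G' ≥ (G / B) ^ ((1 + m) / 2)`, whose exponent is less than `1`.
The first inequality brings `G` below a threshold, the second one makes it vanish.
-/

section

open Filter Topology

variable {d : ℕ}

local notation "𝔼" d:max => EuclideanSpace ℝ (Fin d)

/-! ### The spatial Laplacian -/

lemma spaceLap_congr_of_eventuallyEq {f g : 𝔼 d → ℝ} {x : 𝔼 d} (h : f =ᶠ[𝓝 x] g) :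
    spaceLap f x = spaceLap g x := by
  refine Finset.sum_congr rfl fun i _ => ?_
  have hderiv : (fun y => fderiv ℝ f y (EuclideanSpace.single i 1)) =ᶠ[𝓝 x]
      fun y => fderiv ℝ g y (EuclideanSpace.single i 1) := by
    filter_upwards [h.eventuallyEq_nhds] with y hy
    rw [hy.fderiv_eq]
  rw [hderiv.fderiv_eq]

lemma spaceLap_const (c : ℝ) (x : 𝔼 d) : spaceLap (fun _ => c) x = 0 := by
  simp [spaceLap]

lemma spaceLap_neg (f : 𝔼 d → ℝ) (x : 𝔼 d) : spaceLap (fun y => -f y) x = -spaceLap f x := by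
  simp [spaceLap, fderiv_fun_neg]

lemma spaceLap_comp {f : 𝔼 d → ℝ} {x : 𝔼 d} {h h' : ℝ → ℝ} {h'' : ℝ} (hf : ContDiffAt ℝ 2 f x)
    (hh : ∀ᶠ y in 𝓝 (f x), HasDerivAt h (h' y) y) (hh' : HasDerivAt h' h'' (f x)) :
    spaceLap (fun y => h (f y)) x =
      h'' * ∑ i : Fin d, (fderiv ℝ f x (EuclideanSpace.single i 1)) ^ 2
        + h' (f x) * spaceLap f x := by
  unfold spaceLap
  rw [Finset.mul_sum, Finset.mul_sum, ← Finset.sum_add_distrib]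
  refine Finset.sum_congr rfl fun i _ => ?_
  have hdiff : ∀ᶠ y in 𝓝 x, DifferentiableAt ℝ f y := by
    filter_upwards [hf.eventually (by simp)] with y hy
    exact hy.differentiableAt (by norm_num)
  have hfirst : (fun y => fderiv ℝ (fun y => h (f y)) y (EuclideanSpace.single i 1)) =ᶠ[𝓝 x]
      fun y => h' (f y) * fderiv ℝ f y (EuclideanSpace.single i 1) := by
    filter_upwards [hdiff, hf.continuousAt.eventually hh] with y hfy hhy
    rw [show fderiv ℝ (fun y => h (f y)) y = h' (f y) • fderiv ℝ f y from
      (hhy.comp_hasFDerivAt y hfy.hasFDerivAt).fderiv]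
    rfl
  have hpartial : DifferentiableAt ℝ (fun y => fderiv ℝ f y (EuclideanSpace.single i 1)) x :=
    ((hf.fderiv_right (m := 1) (by norm_num)).differentiableAt (by norm_num)).clm_apply
      (differentiableAt_const _)
  have houter : HasFDerivAt (fun y => h' (f y)) (h'' • fderiv ℝ f x) x :=
    hh'.comp_hasFDerivAt x hdiff.self_of_nhds.hasFDerivAt
  rw [hfirst.fderiv_eq, fderiv_fun_mul houter.differentiableAt hpartial, houter.fderiv]
  simp only [add_apply, smul_apply, smul_eq_mul]
  ring

lemma spaceLap_comp_smul_sub {f : 𝔼 d → ℝ} (hf : ContDiff ℝ 2 f) (c : ℝ) (x₀ x : 𝔼 d) :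
    spaceLap (fun y => f (c • (y - x₀))) x = c ^ 2 * spaceLap f (c • (x - x₀)) := by
  have hchain : ∀ (g : 𝔼 d → ℝ), Differentiable ℝ g → ∀ y v : 𝔼 d,
      fderiv ℝ (fun z => g (c • (z - x₀))) y v = c * fderiv ℝ g (c • (y - x₀)) v := by
    intro g hg y v
    have hinner : HasFDerivAt (fun z : 𝔼 d => c • (z - x₀)) (c • .id ℝ (𝔼 d)) y :=
      ((hasFDerivAt_id y).sub_const x₀).const_smul c
    rw [show fderiv ℝ (fun z => g (c • (z - x₀))) y = _ from
      ((hg (c • (y - x₀))).hasFDerivAt.comp y hinner).fderiv]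
    simp
  unfold spaceLap
  rw [Finset.mul_sum]
  refine Finset.sum_congr rfl fun i _ => ?_
  have hpartial : Differentiable ℝ fun z => fderiv ℝ f z (EuclideanSpace.single i 1) :=
    ((hf.fderiv_right (m := 1) (by norm_num)).clm_apply contDiff_const).differentiable
      (by norm_num)
  have hscaled : DifferentiableAt ℝ
      (fun z => fderiv ℝ f (c • (z - x₀)) (EuclideanSpace.single i 1)) x :=
    (hpartial.comp (by fun_prop : Differentiable ℝ fun z : 𝔼 d => c • (z - x₀))) x
  simp_rw [hchain f (hf.differentiable (by norm_num))]
  rw [fderiv_const_mul hscaled, smul_apply, smul_eq_mul, hchain _ hpartial]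
  ring

lemma continuous_spaceLap {f : 𝔼 d → ℝ} (hf : ContDiff ℝ 2 f) : Continuous (spaceLap f) := by
  refine continuous_finsetSum _ fun i _ => ?_
  have hpartial : ContDiff ℝ 1 fun y => fderiv ℝ f y (EuclideanSpace.single i 1) :=
    (hf.fderiv_right (by norm_num)).clm_apply contDiff_const
  exact (hpartial.continuous_fderiv (by norm_num)).clm_apply continuous_const

section IntegrationByParts

variable {V : Type*} [NormedAddCommGroup V] [NormedSpace ℝ V] [FiniteDimensional ℝ V]
  [MeasurableSpace V] [BorelSpace V] {μ : Measure V} [μ.IsAddHaarMeasure]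

lemma integral_mul_fderiv_eq_neg_fderiv_mul_of_hasCompactSupport {f g : V → ℝ}
    (hf : ContDiff ℝ 1 f) (hg : ContDiff ℝ 1 g) (hsupp : HasCompactSupport f) (v : V) :
    ∫ x, f x * fderiv ℝ g x v ∂μ = -∫ x, fderiv ℝ f x v * g x ∂μ := by
  have hf' : Continuous fun x => fderiv ℝ f x v :=
    (hf.continuous_fderiv (by norm_num)).clm_apply continuous_const
  have hg' : Continuous fun x => fderiv ℝ g x v :=
    (hg.continuous_fderiv (by norm_num)).clm_apply continuous_const
  exact integral_mul_fderiv_eq_neg_fderiv_mul_of_integrable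
    ((hf'.mul hg.continuous).integrable_of_hasCompactSupport
      (hsupp.fderiv_apply (𝕜 := ℝ) v).mul_right)
    ((hf.continuous.mul hg').integrable_of_hasCompactSupport hsupp.mul_right)
    ((hf.continuous.mul hg.continuous).integrable_of_hasCompactSupport hsupp.mul_right)
    (fun x _ => hf.differentiable (by norm_num) x) (fun x _ => hg.differentiable (by norm_num) x)

lemma integral_fderiv_fderiv_mul_eq_of_hasCompactSupport {f g : V → ℝ}
    (hf : ContDiff ℝ 2 f) (hg : ContDiff ℝ 2 g) (hsupp : HasCompactSupport f) (v : V) :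
    ∫ x, fderiv ℝ (fun y => fderiv ℝ f y v) x v * g x ∂μ =
      ∫ x, f x * fderiv ℝ (fun y => fderiv ℝ g y v) x v ∂μ := by
  have hf' : ContDiff ℝ 1 fun y => fderiv ℝ f y v :=
    (hf.fderiv_right (by norm_num)).clm_apply contDiff_const
  have hg' : ContDiff ℝ 1 fun y => fderiv ℝ g y v :=
    (hg.fderiv_right (by norm_num)).clm_apply contDiff_const
  rw [integral_mul_fderiv_eq_neg_fderiv_mul_of_hasCompactSupport (hf.of_le (by norm_num)) hg'
      hsupp v,
    integral_mul_fderiv_eq_neg_fderiv_mul_of_hasCompactSupport hf' (hg.of_le (by norm_num))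
      (hsupp.fderiv_apply (𝕜 := ℝ) v) v, neg_neg]

end IntegrationByParts

lemma integral_spaceLap_mul_eq {f g : 𝔼 d → ℝ} (hf : ContDiff ℝ 2 f) (hg : ContDiff ℝ 2 g)
    (hsupp : HasCompactSupport f) :
    ∫ x, spaceLap f x * g x = ∫ x, f x * spaceLap g x := by
  have hcont : ∀ {h : 𝔼 d → ℝ}, ContDiff ℝ 2 h → ∀ v : 𝔼 d,
      Continuous fun x => fderiv ℝ (fun y => fderiv ℝ h y v) x v := fun {h} hh v =>
    (((hh.fderiv_right (m := 1) (by norm_num)).clm_apply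
      contDiff_const).continuous_fderiv (by norm_num)).clm_apply continuous_const
  simp only [spaceLap, Finset.sum_mul, Finset.mul_sum]
  rw [integral_finsetSum, integral_finsetSum]
  · exact Finset.sum_congr rfl fun i _ =>
      integral_fderiv_fderiv_mul_eq_of_hasCompactSupport hf hg hsupp _
  · exact fun i _ => (hf.continuous.mul (hcont hg _)).integrable_of_hasCompactSupport
      hsupp.mul_right
  · exact fun i _ => ((hcont hf _).mul hg.continuous).integrable_of_hasCompactSupport
      ((hsupp.fderiv_apply (𝕜 := ℝ) _).fderiv_apply (𝕜 := ℝ) _).mul_right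

/-! ### Smooth truncations -/

/-- A smooth nondecreasing cutoff on `ℝ`, equal to `0` on `(-∞, δ]` and to `1` on `[2δ, ∞)`. -/
noncomputable def smoothCutoff (δ w : ℝ) : ℝ := smoothTransition (w / δ - 1)

/-- The primitive of `smoothCutoff δ`: a convex function which vanishes up to `δ` and has slope `1`
from `2δ` on. It is applied to `w = u ^ m`. -/
noncomputable def truncatedId (δ w : ℝ) : ℝ := ∫ x in (0 : ℝ)..w, smoothCutoff δ x

/-- The function of the density `u` whose derivative is `smoothCutoff δ (u ^ m)`. -/
noncomputable def truncatedDensity (δ m v : ℝ) : ℝ := ∫ x in (0 : ℝ)..v, smoothCutoff δ (x ^ m)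

lemma contDiff_smoothCutoff (δ : ℝ) : ContDiff ℝ 1 (smoothCutoff δ) :=
  (smoothTransition.contDiff (n := 1)).comp (by fun_prop)

lemma continuous_smoothCutoff (δ : ℝ) : Continuous (smoothCutoff δ) :=
  (contDiff_smoothCutoff δ).continuous

lemma smoothCutoff_nonneg (δ w : ℝ) : 0 ≤ smoothCutoff δ w := smoothTransition.nonneg _

lemma smoothCutoff_le_one (δ w : ℝ) : smoothCutoff δ w ≤ 1 := smoothTransition.le_one _

lemma smoothCutoff_eq_zero {δ w : ℝ} (hδ : 0 < δ) (hw : w ≤ δ) : smoothCutoff δ w = 0 :=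
  smoothTransition.zero_of_nonpos (by linarith [(div_le_one hδ).2 hw])

lemma smoothCutoff_eq_one {δ w : ℝ} (hδ : 0 < δ) (hw : 2 * δ ≤ w) : smoothCutoff δ w = 1 :=
  smoothTransition.one_of_one_le (by linarith [(le_div_iff₀ hδ).2 hw])

lemma monotone_smoothCutoff {δ : ℝ} (hδ : 0 < δ) : Monotone (smoothCutoff δ) := fun _ _ h =>
  smoothTransition.monotone (by linarith [div_le_div_of_nonneg_right h hδ.le])

lemma deriv_smoothCutoff_eq_zero {δ w : ℝ} (hδ : 0 < δ) (hw : 2 * δ < w) :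
    deriv (smoothCutoff δ) w = 0 := by
  have hconst : smoothCutoff δ =ᶠ[𝓝 w] fun _ => 1 := by
    filter_upwards [Ioi_mem_nhds hw] with y hy
    exact smoothCutoff_eq_one hδ (le_of_lt hy)
  rw [hconst.deriv_eq, deriv_const]

lemma continuous_smoothCutoff_rpow (δ : ℝ) {m : ℝ} (hm : 0 ≤ m) :
    Continuous fun x : ℝ => smoothCutoff δ (x ^ m) :=
  (continuous_smoothCutoff δ).comp (Real.continuous_rpow_const hm)

lemma hasDerivAt_truncatedId (δ w : ℝ) : HasDerivAt (truncatedId δ) (smoothCutoff δ w) w :=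
  (continuous_smoothCutoff δ).integral_hasStrictDerivAt 0 w |>.hasDerivAt

lemma contDiff_truncatedId (δ : ℝ) : ContDiff ℝ 2 (truncatedId δ) := by
  have hderiv : deriv (truncatedId δ) = smoothCutoff δ :=
    funext fun w => (hasDerivAt_truncatedId δ w).deriv
  rw [show (2 : WithTop ℕ∞) = 1 + 1 by norm_num, contDiff_succ_iff_deriv, hderiv]
  exact ⟨fun w => (hasDerivAt_truncatedId δ w).differentiableAt, by simp, contDiff_smoothCutoff δ⟩

lemma hasDerivAt_truncatedDensity (δ : ℝ) {m : ℝ} (hm : 0 ≤ m) (v : ℝ) :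
    HasDerivAt (truncatedDensity δ m) (smoothCutoff δ (v ^ m)) v :=
  (continuous_smoothCutoff_rpow δ hm).integral_hasStrictDerivAt 0 v |>.hasDerivAt

lemma truncatedId_eq_zero {δ w : ℝ} (hδ : 0 < δ) (hw : w ≤ δ) : truncatedId δ w = 0 :=
  intervalIntegral.integral_zero_ae <| .of_forall fun _ hx =>
    smoothCutoff_eq_zero hδ (hx.2.trans (max_le hδ.le hw))

lemma sub_le_integral_of_eq_one {g : ℝ → ℝ} (hg : Continuous g) (hnonneg : ∀ x, 0 ≤ g x)
    {a : ℝ} (ha : 0 ≤ a) (hone : ∀ x, a ≤ x → g x = 1) {w : ℝ} (hw : 0 ≤ w) :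
    w - a ≤ ∫ x in (0 : ℝ)..w, g x := by
  rcases le_total w a with hwa | haw
  · linarith [intervalIntegral.integral_nonneg (μ := volume) hw fun x _ => hnonneg x]
  · have hinit : 0 ≤ ∫ x in (0 : ℝ)..a, g x :=
      intervalIntegral.integral_nonneg ha fun x _ => hnonneg x
    have htail : ∫ x in a..w, g x = w - a := by
      rw [intervalIntegral.integral_congr (g := fun _ => (1 : ℝ)) fun x hx =>
        hone x (uIcc_of_le haw ▸ hx).1, integral_one]
    rw [← intervalIntegral.integral_add_adjacent_intervals (b := a)
      (hg.intervalIntegrable _ _) (hg.intervalIntegrable _ _), htail]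
    linarith

lemma integral_le_of_le_one {g : ℝ → ℝ} (hg : Continuous g) (hle : ∀ x, g x ≤ 1) {w : ℝ}
    (hw : 0 ≤ w) : ∫ x in (0 : ℝ)..w, g x ≤ w := by
  simpa using intervalIntegral.integral_mono_on hw (hg.intervalIntegrable _ _)
    (continuous_const.intervalIntegrable (μ := volume) _ _) fun x _ => hle x

lemma abs_truncatedId_sub_le {δ w : ℝ} (hδ : 0 < δ) (hw : 0 ≤ w) :
    |truncatedId δ w - w| ≤ 2 * δ := by
  have hlower := sub_le_integral_of_eq_one (continuous_smoothCutoff δ) (smoothCutoff_nonneg δ)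
    (by positivity) (fun _ => smoothCutoff_eq_one hδ) hw
  have hupper := integral_le_of_le_one (continuous_smoothCutoff δ) (smoothCutoff_le_one δ) hw
  exact abs_le.2 ⟨by unfold truncatedId; linarith, by unfold truncatedId; linarith⟩

lemma abs_truncatedDensity_sub_le {δ m v : ℝ} (hδ : 0 < δ) (hm : 0 < m) (hv : 0 ≤ v) :
    |truncatedDensity δ m v - v| ≤ (2 * δ) ^ (1 / m) := by
  have hone : ∀ x, (2 * δ) ^ (1 / m) ≤ x → smoothCutoff δ (x ^ m) = 1 := fun x hx =>
    smoothCutoff_eq_one hδ <| by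
      have := Real.rpow_le_rpow (by positivity) hx hm.le
      rwa [← Real.rpow_mul (by positivity), one_div_mul_cancel hm.ne', Real.rpow_one] at this
  have hcont := continuous_smoothCutoff_rpow δ hm.le
  have hlower := sub_le_integral_of_eq_one hcont (fun _ => smoothCutoff_nonneg δ _)
    (by positivity) hone hv
  have hupper := integral_le_of_le_one hcont (fun _ => smoothCutoff_le_one δ _) hv
  have : 0 ≤ (2 * δ) ^ (1 / m) := by positivity
  exact abs_le.2 ⟨by unfold truncatedDensity; linarith, by unfold truncatedDensity; linarith⟩

/-! ### Solutions extended by zero -/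

/-- `U` is a solution of `∂ₜ U = Δ(U^m)` on `(0, T)` in the interior of the compact set `K`,
extended continuously by zero outside `interior K`, and to all times, and extinct at time `T`.
Unlike `IsDirichletSol` this has continuity on all of `ℝ × ℝ^d`, which removes all boundary
bookkeeping. -/
structure IsExtendedSol (m : ℝ) (K : Set (𝔼 d)) (T : ℝ) (U : ℝ → 𝔼 d → ℝ) : Prop where
  exponent_pos : 0 < m
  time_pos : 0 < T
  isCompact : IsCompact K
  continuous : Continuous fun p : ℝ × 𝔼 d => U p.1 p.2
  nonneg : ∀ t x, 0 ≤ U t x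
  eq_zero : ∀ t, ∀ x ∉ interior K, U t x = 0
  pos : ∀ t ∈ Ioo 0 T, ∀ x ∈ interior K, 0 < U t x
  contDiffAt : ∀ t ∈ Ioo 0 T, ∀ x ∈ interior K,
    ContDiffAt ℝ 2 (fun p : ℝ × 𝔼 d => U p.1 p.2) (t, x)
  deriv_eq : ∀ t ∈ Ioo 0 T, ∀ x ∈ interior K,
    deriv (fun s => U s x) t = spaceLap (fun y => U t y ^ m) x
  extinct : ∀ x, U T x = 0

/-- The time derivative of `truncatedDensity δ m (U t x)`. -/
noncomputable def truncatedTimeDeriv (U : ℝ → 𝔼 d → ℝ) (m δ : ℝ) (p : ℝ × 𝔼 d) : ℝ :=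
  smoothCutoff δ (U p.1 p.2 ^ m) * deriv (fun s => U s p.2) p.1

namespace IsExtendedSol

variable {m T δ t : ℝ} {K : Set (𝔼 d)} {U : ℝ → 𝔼 d → ℝ} {x : 𝔼 d}

lemma continuous_slice (h : IsExtendedSol m K T U) (t : ℝ) : Continuous (U t) :=
  h.continuous.comp (f := fun x : 𝔼 d => (t, x)) (by fun_prop)

lemma continuous_rpow (h : IsExtendedSol m K T U) {p : ℝ} (hp : 0 ≤ p) :
    Continuous fun q : ℝ × 𝔼 d => U q.1 q.2 ^ p :=
  h.continuous.rpow_const fun _ => Or.inr hp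

lemma continuous_rpow_slice (h : IsExtendedSol m K T U) {p : ℝ} (hp : 0 ≤ p) (t : ℝ) :
    Continuous fun x => U t x ^ p :=
  (h.continuous_slice t).rpow_const fun _ => Or.inr hp

lemma rpow_eq_zero (h : IsExtendedSol m K T U) (t : ℝ) (hx : x ∉ interior K) :
    U t x ^ m = 0 := by
  rw [h.eq_zero t x hx, Real.zero_rpow h.exponent_pos.ne']

lemma eventually_rpow_le (h : IsExtendedSol m K T U) (hδ : 0 < δ) (t : ℝ)
    (hx : x ∉ interior K) : ∀ᶠ p : ℝ × 𝔼 d in 𝓝 (t, x), U p.1 p.2 ^ m ≤ δ := by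
  have hlt : (fun p : ℝ × 𝔼 d => U p.1 p.2 ^ m) (t, x) < δ := by
    simpa only [h.rpow_eq_zero t hx] using hδ
  exact ((h.continuous_rpow h.exponent_pos.le).continuousAt.eventually (Iio_mem_nhds hlt)).mono
    fun _ hp => le_of_lt hp

lemma truncatedId_eventuallyEq_zero (h : IsExtendedSol m K T U) (hδ : 0 < δ) (t : ℝ)
    (hx : x ∉ interior K) : (fun y => truncatedId δ (U t y ^ m)) =ᶠ[𝓝 x] fun _ => 0 := by
  have hslice : ContinuousAt (fun y : 𝔼 d => (t, y)) x := by fun_prop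
  exact (hslice.eventually (h.eventually_rpow_le hδ t hx)).mono fun y hy =>
    truncatedId_eq_zero hδ hy

lemma truncatedTimeDeriv_eq_zero (h : IsExtendedSol m K T U) (hδ : 0 < δ) (t : ℝ)
    (hx : x ∉ interior K) : truncatedTimeDeriv U m δ (t, x) = 0 := by
  simp only [truncatedTimeDeriv, h.rpow_eq_zero t hx, smoothCutoff_eq_zero hδ hδ.le, zero_mul]

lemma contDiffAt_rpow_slice (h : IsExtendedSol m K T U) (ht : t ∈ Ioo 0 T)
    (hx : x ∈ interior K) : ContDiffAt ℝ 2 (fun y => U t y ^ m) x :=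
  ((h.contDiffAt t ht x hx).comp x (f := fun y : 𝔼 d => (t, y)) (by fun_prop)).rpow_const_of_ne
    (h.pos t ht x hx).ne'

lemma hasDerivAt_time (h : IsExtendedSol m K T U) (ht : t ∈ Ioo 0 T) (hx : x ∈ interior K) :
    HasDerivAt (fun s => U s x) (fderiv ℝ (fun p : ℝ × 𝔼 d => U p.1 p.2) (t, x) (1, 0)) t := by
  have hU := ((h.contDiffAt t ht x hx).differentiableAt (by simp)).hasFDerivAt
  have hline : HasDerivAt (fun s : ℝ => (s, x)) ((1 : ℝ), (0 : 𝔼 d)) t :=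
    (hasDerivAt_id t).prodMk (hasDerivAt_const t x)
  exact hU.comp_hasDerivAt t hline

lemma continuousAt_truncatedTimeDeriv (h : IsExtendedSol m K T U) (hδ : 0 < δ)
    (ht : t ∈ Ioo 0 T) (x : 𝔼 d) : ContinuousAt (truncatedTimeDeriv U m δ) (t, x) := by
  by_cases hx : x ∈ interior K
  · have hopen : IsOpen (Ioo 0 T ×ˢ interior K) := isOpen_Ioo.prod isOpen_interior
    have hfderiv : truncatedTimeDeriv U m δ =ᶠ[𝓝 (t, x)] fun p =>
        smoothCutoff δ (U p.1 p.2 ^ m) * fderiv ℝ (fun p : ℝ × 𝔼 d => U p.1 p.2) p (1, 0) := by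
      filter_upwards [hopen.mem_nhds (show (t, x) ∈ Ioo 0 T ×ˢ interior K from ⟨ht, hx⟩)] with p hp
      rw [truncatedTimeDeriv, (h.hasDerivAt_time hp.1 hp.2).deriv]
    rw [continuousAt_congr hfderiv]
    refine ((continuous_smoothCutoff δ).comp
      (h.continuous_rpow h.exponent_pos.le)).continuousAt.mul ?_
    exact ((h.contDiffAt t ht x hx).fderiv_right (m := 0) (by norm_num)).continuousAt.clm_apply
      continuousAt_const
  · have hzero : truncatedTimeDeriv U m δ =ᶠ[𝓝 (t, x)] fun _ => 0 := by
      filter_upwards [h.eventually_rpow_le hδ t hx] with p hp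
      rw [truncatedTimeDeriv, smoothCutoff_eq_zero hδ hp, zero_mul]
    exact (continuousAt_congr hzero).2 continuousAt_const

lemma truncatedDensity_sub_eq_integral (h : IsExtendedSol m K T U) (hδ : 0 < δ) {s : ℝ}
    (hs : 0 < s) (hst : s ≤ t) (ht : t < T) (x : 𝔼 d) :
    truncatedDensity δ m (U t x) - truncatedDensity δ m (U s x) =
      ∫ τ in s..t, truncatedTimeDeriv U m δ (τ, x) := by
  by_cases hx : x ∈ interior K
  · have hmem : ∀ τ ∈ uIcc s t, τ ∈ Ioo 0 T := fun τ hτ => by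
      rw [uIcc_of_le hst] at hτ
      exact ⟨hs.trans_le hτ.1, hτ.2.trans_lt ht⟩
    refine (intervalIntegral.integral_eq_sub_of_hasDerivAt
      (f := fun τ => truncatedDensity δ m (U τ x)) (fun τ hτ => ?_) ?_).symm
    · have hU := h.hasDerivAt_time (hmem τ hτ) hx
      simp only [truncatedTimeDeriv, hU.deriv]
      exact (hasDerivAt_truncatedDensity δ h.exponent_pos.le (U τ x)).comp τ hU
    · refine ContinuousOn.intervalIntegrable fun τ hτ => ?_
      exact ((h.continuousAt_truncatedTimeDeriv hδ (hmem τ hτ) x).comp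
        (f := fun τ : ℝ => (τ, x)) (by fun_prop)).continuousWithinAt
  · simp [h.truncatedTimeDeriv_eq_zero hδ _ hx, h.eq_zero _ x hx]

lemma contDiff_truncatedId_slice (h : IsExtendedSol m K T U) (hδ : 0 < δ) (ht : t ∈ Ioo 0 T) :
    ContDiff ℝ 2 fun x => truncatedId δ (U t x ^ m) := by
  refine contDiff_iff_contDiffAt.2 fun x => ?_
  by_cases hx : x ∈ interior K
  · exact (contDiff_truncatedId δ).contDiffAt.comp x (h.contDiffAt_rpow_slice ht hx)
  · exact contDiffAt_const.congr_of_eventuallyEq (h.truncatedId_eventuallyEq_zero hδ t hx)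

-- Kato's inequality for the convex function `truncatedId δ`; it is an equality where that function
-- is affine, and there the sign of the factor `c` does not matter.
lemma truncatedTimeDeriv_mul_le (h : IsExtendedSol m K T U) (hδ : 0 < δ) (ht : t ∈ Ioo 0 T)
    {c : ℝ} (hc : x ∈ interior K → 0 ≤ c ∨ 2 * δ < U t x ^ m) :
    truncatedTimeDeriv U m δ (t, x) * c ≤
      spaceLap (fun y => truncatedId δ (U t y ^ m)) x * c := by
  by_cases hx : x ∈ interior K
  · have hgrad : 0 ≤ ∑ i : Fin d,
        (fderiv ℝ (fun y => U t y ^ m) x (EuclideanSpace.single i 1)) ^ 2 :=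
      Finset.sum_nonneg fun i _ => sq_nonneg _
    have hconvex : 0 ≤ deriv (smoothCutoff δ) (U t x ^ m) *
        (∑ i : Fin d, (fderiv ℝ (fun y => U t y ^ m) x (EuclideanSpace.single i 1)) ^ 2) * c := by
      rcases hc hx with hc | hc
      · exact mul_nonneg (mul_nonneg (monotone_smoothCutoff hδ).deriv_nonneg hgrad) hc
      · rw [deriv_smoothCutoff_eq_zero hδ hc, zero_mul, zero_mul]
    have hcutoff : HasDerivAt (smoothCutoff δ) (deriv (smoothCutoff δ) (U t x ^ m)) (U t x ^ m) :=
      ((contDiff_smoothCutoff δ).differentiable (by norm_num) _).hasDerivAt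
    rw [spaceLap_comp (f := fun y => U t y ^ m) (h.contDiffAt_rpow_slice ht hx)
      (.of_forall (hasDerivAt_truncatedId δ)) hcutoff, truncatedTimeDeriv, h.deriv_eq t ht x hx]
    linarith
  · rw [spaceLap_congr_of_eventuallyEq (h.truncatedId_eventuallyEq_zero hδ t hx), spaceLap_const,
      h.truncatedTimeDeriv_eq_zero hδ t hx]

lemma setIntegral_truncatedTimeDeriv_mul_le (h : IsExtendedSol m K T U) (hδ : 0 < δ)
    (ht : t ∈ Ioo 0 T) {φ : 𝔼 d → ℝ} (hφ : ContDiff ℝ 2 φ)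
    (hsign : ∀ x ∈ interior K, 0 ≤ φ x ∨ 2 * δ < U t x ^ m) :
    ∫ x in K, truncatedTimeDeriv U m δ (t, x) * φ x ≤
      ∫ x in K, truncatedId δ (U t x ^ m) * spaceLap φ x := by
  set w : 𝔼 d → ℝ := fun x => truncatedId δ (U t x ^ m)
  have hw2 : ContDiff ℝ 2 w := h.contDiff_truncatedId_slice hδ ht
  have hzero : ∀ x ∉ K, w =ᶠ[𝓝 x] fun _ => 0 := fun x hx =>
    h.truncatedId_eventuallyEq_zero hδ t fun hx' => hx (interior_subset hx')
  have hsupp : HasCompactSupport w := .intro h.isCompact fun x hx => (hzero x hx).self_of_nhds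
  calc ∫ x in K, truncatedTimeDeriv U m δ (t, x) * φ x
      ≤ ∫ x in K, spaceLap w x * φ x := by
        refine setIntegral_mono_on ?_ ?_ h.isCompact.measurableSet fun x _ =>
          h.truncatedTimeDeriv_mul_le hδ ht (hsign x)
        · refine ContinuousOn.integrableOn_compact h.isCompact fun x _ => ?_
          exact (((h.continuousAt_truncatedTimeDeriv hδ ht x).comp (f := fun y : 𝔼 d => (t, y))
            (by fun_prop)).mul hφ.continuous.continuousAt).continuousWithinAt
        · exact ((continuous_spaceLap hw2).mul hφ.continuous).continuousOn.integrableOn_compact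
            h.isCompact
    _ = ∫ x, spaceLap w x * φ x := by
        refine setIntegral_eq_integral_of_forall_compl_eq_zero fun x hx => ?_
        rw [spaceLap_congr_of_eventuallyEq (hzero x hx), spaceLap_const, zero_mul]
    _ = ∫ x, w x * spaceLap φ x := integral_spaceLap_mul_eq hw2 hφ hsupp
    _ = ∫ x in K, w x * spaceLap φ x :=
        (setIntegral_eq_integral_of_forall_compl_eq_zero fun x hx => by
          rw [(hzero x hx).self_of_nhds, zero_mul]).symm

end IsExtendedSol

/-! ### The weak inequality -/

lemma antitoneOn_Icc_of_antitoneOn_Ioo {g : ℝ → ℝ} {a b : ℝ} (hg : ContinuousOn g (Icc a b))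
    (hanti : AntitoneOn g (Ioo a b)) : AntitoneOn g (Icc a b) := by
  intro s hs t ht hst
  rcases hst.eq_or_lt with rfl | hlt
  · exact le_rfl
  obtain ⟨c, hsc, hct⟩ := exists_between hlt
  have hc : c ∈ Ioo a b := ⟨hs.1.trans_lt hsc, hct.trans_le ht.2⟩
  have hleft : g c ≤ g s := by
    have := left_nhdsWithin_Ioo_neBot hsc
    refine ge_of_tendsto ((hg s hs).mono_left (nhdsWithin_mono s (s := Ioo s c) fun τ hτ =>
      ⟨hs.1.trans hτ.1.le, hτ.2.le.trans hc.2.le⟩)) ?_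
    filter_upwards [self_mem_nhdsWithin] with τ hτ
    exact hanti ⟨hs.1.trans_lt hτ.1, hτ.2.trans hc.2⟩ hc hτ.2.le
  have hright : g t ≤ g c := by
    have := right_nhdsWithin_Ioo_neBot hct
    refine le_of_tendsto ((hg t ht).mono_left (nhdsWithin_mono t (s := Ioo c t) fun τ hτ =>
      ⟨hc.1.le.trans hτ.1.le, hτ.2.le.trans ht.2⟩)) ?_
    filter_upwards [self_mem_nhdsWithin] with τ hτ
    exact hanti hc ⟨hc.1.trans hτ.1, hτ.2.trans_le ht.2⟩ hτ.1.le
  exact hright.trans hleft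

section CompactIntegrals

variable {K : Set (𝔼 d)}

lemma continuous_setIntegral_mul {F : ℝ → 𝔼 d → ℝ}
    (hF : Continuous fun p : ℝ × 𝔼 d => F p.1 p.2) {g : 𝔼 d → ℝ} (hg : Continuous g)
    (hK : IsCompact K) : Continuous fun t => ∫ x in K, F t x * g x :=
  continuous_parametric_integral_of_continuous (f := fun t x => F t x * g x)
    (hF.mul (hg.comp continuous_snd)) hK

lemma abs_setIntegral_mul_sub_le {f g φ : 𝔼 d → ℝ} {c : ℝ} (hK : IsCompact K)
    (hf : Continuous f) (hg : Continuous g) (hφ : Continuous φ) (hfg : ∀ x, |f x - g x| ≤ c) :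
    |(∫ x in K, f x * φ x) - ∫ x in K, g x * φ x| ≤ c * ∫ x in K, |φ x| := by
  have hfφ : IntegrableOn (fun x => f x * φ x) K :=
    (hf.mul hφ).continuousOn.integrableOn_compact hK
  have hgφ : IntegrableOn (fun x => g x * φ x) K :=
    (hg.mul hφ).continuousOn.integrableOn_compact hK
  rw [← integral_sub hfφ hgφ, ← integral_const_mul]
  refine abs_integral_le_integral_abs.trans (integral_mono ?_ ?_ fun x => ?_)
  · exact (hfφ.sub hgφ).abs
  · exact (hφ.abs.const_mul c).continuousOn.integrableOn_compact hK
  · rw [← sub_mul, abs_mul]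
    exact mul_le_mul_of_nonneg_right (hfg x) (abs_nonneg _)

end CompactIntegrals

lemma continuous_truncatedId (δ : ℝ) : Continuous (truncatedId δ) :=
  (contDiff_truncatedId δ).continuous

lemma continuous_truncatedDensity (δ : ℝ) {m : ℝ} (hm : 0 ≤ m) :
    Continuous (truncatedDensity δ m) :=
  continuous_iff_continuousAt.2 fun v => (hasDerivAt_truncatedDensity δ hm v).continuousAt

namespace IsExtendedSol

variable {m T δ s t : ℝ} {K : Set (𝔼 d)} {U : ℝ → 𝔼 d → ℝ} {φ : 𝔼 d → ℝ}

lemma integrable_truncatedTimeDeriv_mul (h : IsExtendedSol m K T U) (hδ : 0 < δ) (hs : 0 < s)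
    (ht : t < T) (hφ : Continuous φ) :
    Integrable (Function.uncurry fun (x : 𝔼 d) (τ : ℝ) => truncatedTimeDeriv U m δ (τ, x) * φ x)
      ((volume.restrict K).prod (volume.restrict (Ioc s t))) := by
  have hcompact : IntegrableOn (Function.uncurry fun (x : 𝔼 d) (τ : ℝ) =>
      truncatedTimeDeriv U m δ (τ, x) * φ x) (K ×ˢ Icc s t) := by
    refine ContinuousOn.integrableOn_compact (h.isCompact.prod isCompact_Icc) fun p hp => ?_
    have hp2 : p.2 ∈ Ioo 0 T := ⟨hs.trans_le hp.2.1, hp.2.2.trans_lt ht⟩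
    have hswap : ContinuousAt (fun q : 𝔼 d × ℝ => (q.2, q.1)) p := by fun_prop
    exact ((ContinuousAt.comp (f := fun q : 𝔼 d × ℝ => (q.2, q.1))
      (h.continuousAt_truncatedTimeDeriv hδ hp2 p.1) hswap).mul
        (hφ.comp continuous_fst).continuousAt).continuousWithinAt
  rw [Measure.prod_restrict]
  exact hcompact.mono_set (prod_mono le_rfl Ioc_subset_Icc_self)

lemma truncated_weak_ineq (h : IsExtendedSol m K T U) (hδ : 0 < δ) (hs : 0 < s) (hst : s ≤ t)
    (ht : t < T) (hφ : ContDiff ℝ 2 φ)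
    (hsign : ∀ τ ∈ Icc s t, ∀ x ∈ interior K, 0 ≤ φ x ∨ 2 * δ < U τ x ^ m) :
    (∫ x in K, truncatedDensity δ m (U t x) * φ x)
      - (∫ x in K, truncatedDensity δ m (U s x) * φ x) ≤
      ∫ τ in s..t, ∫ x in K, truncatedId δ (U τ x ^ m) * spaceLap φ x := by
  have hint : ∀ τ, IntegrableOn (fun x => truncatedDensity δ m (U τ x) * φ x) K := fun τ =>
    (((continuous_truncatedDensity δ h.exponent_pos.le).comp (h.continuous_slice τ)).mul
      hφ.continuous).continuousOn.integrableOn_compact h.isCompact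
  have hprod := h.integrable_truncatedTimeDeriv_mul hδ hs ht hφ.continuous
  have hright : Continuous fun τ => ∫ x in K, truncatedId δ (U τ x ^ m) * spaceLap φ x :=
    continuous_setIntegral_mul ((continuous_truncatedId δ).comp
      (h.continuous_rpow h.exponent_pos.le)) (continuous_spaceLap hφ) h.isCompact
  have hftc : ∀ x, truncatedDensity δ m (U t x) * φ x - truncatedDensity δ m (U s x) * φ x =
      ∫ τ in Ioc s t, truncatedTimeDeriv U m δ (τ, x) * φ x := fun x => by
    rw [← sub_mul, h.truncatedDensity_sub_eq_integral hδ hs hst ht x,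
      intervalIntegral.integral_of_le hst, integral_mul_const]
  rw [← integral_sub (hint t) (hint s)]
  simp_rw [hftc]
  rw [integral_integral_swap hprod, intervalIntegral.integral_of_le hst]
  refine setIntegral_mono_on hprod.integral_prod_right
    (hright.integrableOn_Icc.mono_set Ioc_subset_Icc_self) measurableSet_Ioc fun τ hτ => ?_
  have hτ' := Ioc_subset_Icc_self hτ
  exact h.setIntegral_truncatedTimeDeriv_mul_le hδ ⟨hs.trans_le hτ'.1, hτ'.2.trans_lt ht⟩ hφ
    (hsign τ hτ')

lemma continuous_setIntegral_rpow_mul (h : IsExtendedSol m K T U) {g : 𝔼 d → ℝ}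
    (hg : Continuous g) : Continuous fun τ => ∫ x in K, U τ x ^ m * g x :=
  continuous_setIntegral_mul (h.continuous_rpow h.exponent_pos.le) hg h.isCompact

lemma integral_truncatedId_mul_le (h : IsExtendedSol m K T U) (hδ : 0 < δ) (hst : s ≤ t)
    {g : 𝔼 d → ℝ} (hg : Continuous g) :
    (∫ τ in s..t, ∫ x in K, truncatedId δ (U τ x ^ m) * g x) ≤
      (∫ τ in s..t, ∫ x in K, U τ x ^ m * g x) + (t - s) * (2 * δ * ∫ x in K, |g x|) := by
  have htrunc : Continuous fun τ => ∫ x in K, truncatedId δ (U τ x ^ m) * g x :=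
    continuous_setIntegral_mul ((continuous_truncatedId δ).comp
      (h.continuous_rpow h.exponent_pos.le)) hg h.isCompact
  have hpow := h.continuous_setIntegral_rpow_mul hg
  have herror : ∀ τ, (∫ x in K, truncatedId δ (U τ x ^ m) * g x) ≤
      (∫ x in K, U τ x ^ m * g x) + 2 * δ * ∫ x in K, |g x| := fun τ => by
    have hslice := h.continuous_rpow_slice h.exponent_pos.le τ
    have hdiff := abs_setIntegral_mul_sub_le h.isCompact
      (f := fun x => truncatedId δ (U τ x ^ m)) ((continuous_truncatedId δ).comp hslice) hslice hg
      fun x => abs_truncatedId_sub_le hδ (Real.rpow_nonneg (h.nonneg τ x) m)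
    linarith [(abs_le.1 hdiff).2]
  calc (∫ τ in s..t, ∫ x in K, truncatedId δ (U τ x ^ m) * g x)
      ≤ ∫ τ in s..t, ((∫ x in K, U τ x ^ m * g x) + 2 * δ * ∫ x in K, |g x|) :=
        intervalIntegral.integral_mono_on hst (htrunc.intervalIntegrable _ _)
          ((hpow.add continuous_const).intervalIntegrable _ _) fun τ _ => herror τ
    _ = _ := by
        rw [intervalIntegral.integral_add (hpow.intervalIntegrable _ _)
          (continuous_const.intervalIntegrable _ _), intervalIntegral.integral_const, smul_eq_mul]

lemma weak_ineq_add_error (h : IsExtendedSol m K T U) (hδ : 0 < δ) (hs : 0 < s) (hst : s ≤ t)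
    (ht : t < T) (hφ : ContDiff ℝ 2 φ)
    (hsign : ∀ τ ∈ Icc s t, ∀ x ∈ interior K, 0 ≤ φ x ∨ 2 * δ < U τ x ^ m) :
    (∫ x in K, U t x * φ x) - (∫ x in K, U s x * φ x) ≤
      (∫ τ in s..t, ∫ x in K, U τ x ^ m * spaceLap φ x) +
        (2 * ((2 * δ) ^ (1 / m) * ∫ x in K, |φ x|) +
          (t - s) * (2 * δ * ∫ x in K, |spaceLap φ x|)) := by
  have htrunc := h.truncated_weak_ineq hδ hs hst ht hφ hsign
  have hright := h.integral_truncatedId_mul_le hδ hst (continuous_spaceLap hφ)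
  have hleft : ∀ τ, |(∫ x in K, truncatedDensity δ m (U τ x) * φ x) - ∫ x in K, U τ x * φ x| ≤
      (2 * δ) ^ (1 / m) * ∫ x in K, |φ x| := fun τ =>
    abs_setIntegral_mul_sub_le h.isCompact
      ((continuous_truncatedDensity δ h.exponent_pos.le).comp (h.continuous_slice τ))
      (h.continuous_slice τ) hφ.continuous fun x =>
        abs_truncatedDensity_sub_le hδ h.exponent_pos (h.nonneg τ x)
  linarith [(abs_le.1 (hleft t)).1, (abs_le.1 (hleft s)).2]

lemma weak_ineq_of_lt (h : IsExtendedSol m K T U) (hs : 0 < s) (hst : s ≤ t) (ht : t < T)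
    (hφ : ContDiff ℝ 2 φ) {δ₀ : ℝ} (hδ₀ : 0 < δ₀)
    (hsign : ∀ τ ∈ Icc s t, ∀ x ∈ interior K, 0 ≤ φ x ∨ δ₀ ≤ U τ x ^ m) :
    (∫ x in K, U t x * φ x) - (∫ x in K, U s x * φ x) ≤
      ∫ τ in s..t, ∫ x in K, U τ x ^ m * spaceLap φ x := by
  have hcont : Continuous fun δ : ℝ => (∫ τ in s..t, ∫ x in K, U τ x ^ m * spaceLap φ x) +
      (2 * ((2 * δ) ^ (1 / m) * ∫ x in K, |φ x|) +
        (t - s) * (2 * δ * ∫ x in K, |spaceLap φ x|)) := by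
    have := h.exponent_pos
    have : Continuous fun δ : ℝ => (2 * δ) ^ (1 / m) :=
      (continuous_const.mul continuous_id).rpow_const fun _ => Or.inr (by positivity)
    fun_prop
  refine ge_of_tendsto ((hcont.tendsto' 0 _ ?_).mono_left (nhdsWithin_le_nhds (s := Ioi 0))) ?_
  · simp [Real.zero_rpow (inv_ne_zero h.exponent_pos.ne')]
  · filter_upwards [Ioo_mem_nhdsGT (half_pos hδ₀)] with δ hδ
    exact h.weak_ineq_add_error hδ.1 hs hst ht hφ fun τ hτ x hx =>
      (hsign τ hτ x hx).imp_right fun hle => by linarith [hδ.2]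

lemma weak_ineq (h : IsExtendedSol m K T U) (hφ : ContDiff ℝ 2 φ)
    (hsign : ∀ s t, 0 < s → s ≤ t → t < T →
      ∃ δ₀ > 0, ∀ τ ∈ Icc s t, ∀ x ∈ interior K, 0 ≤ φ x ∨ δ₀ ≤ U τ x ^ m)
    (hs : 0 ≤ s) (hst : s ≤ t) (ht : t ≤ T) :
    (∫ x in K, U t x * φ x) - (∫ x in K, U s x * φ x) ≤
      ∫ τ in s..t, ∫ x in K, U τ x ^ m * spaceLap φ x := by
  set q : ℝ → ℝ := fun τ => ∫ x in K, U τ x ^ m * spaceLap φ x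
  have hq : Continuous q := h.continuous_setIntegral_rpow_mul (continuous_spaceLap hφ)
  have hsplit : ∀ s t, ∫ τ in s..t, q τ = (∫ τ in (0 : ℝ)..t, q τ) - ∫ τ in (0 : ℝ)..s, q τ :=
    fun s t => (intervalIntegral.integral_interval_sub_left (hq.intervalIntegrable _ _)
      (hq.intervalIntegrable _ _)).symm
  have hcont : Continuous fun t => (∫ x in K, U t x * φ x) - ∫ τ in (0 : ℝ)..t, q τ :=
    (continuous_setIntegral_mul h.continuous hφ.continuous h.isCompact).sub
      (intervalIntegral.continuous_primitive hq.intervalIntegrable 0)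
  have hanti := antitoneOn_Icc_of_antitoneOn_Ioo (a := 0) (b := T) hcont.continuousOn
    fun s hs t ht hst => by
      obtain ⟨δ₀, hδ₀, hsign⟩ := hsign s t hs.1 hst ht.2
      have := h.weak_ineq_of_lt hs.1 hst ht.2 hφ hδ₀ hsign
      rw [hsplit] at this
      linarith
  have := hanti ⟨hs, hst.trans ht⟩ ⟨hs.trans hst, ht⟩ hst
  rw [hsplit]
  linarith

lemma weak_ineq_of_nonneg (h : IsExtendedSol m K T U) (hφ : ContDiff ℝ 2 φ)
    (hnonneg : ∀ x, 0 ≤ φ x) (hs : 0 ≤ s) (hst : s ≤ t) (ht : t ≤ T) :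
    (∫ x in K, U t x * φ x) - (∫ x in K, U s x * φ x) ≤
      ∫ τ in s..t, ∫ x in K, U τ x ^ m * spaceLap φ x :=
  h.weak_ineq hφ (fun _ _ _ _ _ => ⟨1, one_pos, fun _ _ x _ => Or.inl (hnonneg x)⟩) hs hst ht

lemma weak_ineq_of_support_subset (h : IsExtendedSol m K T U) (hφ : ContDiff ℝ 2 φ)
    {S : Set (𝔼 d)} (hS : IsCompact S) (hSK : S ⊆ interior K) (hzero : ∀ x ∉ S, φ x = 0)
    (hs : 0 ≤ s) (hst : s ≤ t) (ht : t ≤ T) :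
    (∫ x in K, U t x * φ x) - (∫ x in K, U s x * φ x) ≤
      ∫ τ in s..t, ∫ x in K, U τ x ^ m * spaceLap φ x := by
  refine h.weak_ineq hφ (fun s t hs hst ht => ?_) hs hst ht
  rcases S.eq_empty_or_nonempty with rfl | hne
  · exact ⟨1, one_pos, fun _ _ x _ => Or.inl (hzero x (notMem_empty x)).ge⟩
  obtain ⟨p, hp, hmin⟩ := (isCompact_Icc.prod hS).exists_isMinOn ((nonempty_Icc.2 hst).prod hne)
    (h.continuous_rpow h.exponent_pos.le).continuousOn
  have hpos : 0 < U p.1 p.2 :=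
    h.pos _ ⟨hs.trans_le hp.1.1, hp.1.2.trans_lt ht⟩ _ (hSK hp.2)
  refine ⟨U p.1 p.2 ^ m, Real.rpow_pos_of_pos hpos _, fun τ hτ x _ => ?_⟩
  by_cases hx : x ∈ S
  · exact Or.inr (hmin (show (τ, x) ∈ Icc s t ×ˢ S from ⟨hτ, hx⟩))
  · exact Or.inl (hzero x hx).ge

lemma mass_le (h : IsExtendedSol m K T U) (hs : 0 ≤ s) (hsT : s ≤ T) :
    (∫ x in K, U s x) ≤ ∫ x in K, U 0 x := by
  simpa [spaceLap_const] using
    h.weak_ineq_of_nonneg (φ := fun _ => 1) contDiff_const (fun _ => zero_le_one) le_rfl hs hsT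

end IsExtendedSol

/-! ### Extension of Dirichlet solutions -/

open Classical in
/-- The extension of `u : [0, T] × closedBall x₀ R → ℝ` to all of `ℝ × ℝ^d`: constant in time
outside `[0, T]` and zero in space outside `closedBall x₀ R`. -/
noncomputable def zeroExtension (x₀ : 𝔼 d) (R T : ℝ) (u : ℝ → 𝔼 d → ℝ) (t : ℝ) (x : 𝔼 d) : ℝ :=
  if dist x x₀ ≤ R then u (max 0 (min T t)) x else 0

lemma clamp_mem_Icc {T : ℝ} (hT : 0 ≤ T) (t : ℝ) : max 0 (min T t) ∈ Icc 0 T :=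
  ⟨le_max_left _ _, max_le hT (min_le_left _ _)⟩

lemma zeroExtension_eq {x₀ x : 𝔼 d} {R T t : ℝ} {u : ℝ → 𝔼 d → ℝ} (ht : t ∈ Icc 0 T)
    (hx : x ∈ closedBall x₀ R) : zeroExtension x₀ R T u t x = u t x := by
  rw [zeroExtension, if_pos (mem_closedBall.1 hx), min_eq_right ht.2, max_eq_right ht.1]

lemma zeroExtension_eventuallyEq {x₀ x : 𝔼 d} {R T t : ℝ} (u : ℝ → 𝔼 d → ℝ) (ht : t ∈ Ioo 0 T)
    (hx : x ∈ ball x₀ R) :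
    (fun p : ℝ × 𝔼 d => zeroExtension x₀ R T u p.1 p.2) =ᶠ[𝓝 (t, x)] fun p => u p.1 p.2 := by
  filter_upwards [(isOpen_Ioo.prod isOpen_ball).mem_nhds
    (show (t, x) ∈ Ioo 0 T ×ˢ ball x₀ R from ⟨ht, hx⟩)] with p hp
  exact zeroExtension_eq (Ioo_subset_Icc_self hp.1) (ball_subset_closedBall hp.2)

namespace IsDirichletSol

variable {m R T : ℝ} {x₀ : 𝔼 d} {u : ℝ → 𝔼 d → ℝ} {u₀ : 𝔼 d → ℝ}

lemma eq_zero_of_mem_sphere (h : IsDirichletSol m x₀ R T u u₀) (hT : 0 < T) {t : ℝ}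
    (ht : t ∈ Icc 0 T) {x : 𝔼 d} (hx : x ∈ sphere x₀ R) : u t x = 0 := by
  obtain ⟨-, hcont, -, -, hsphere, -, -⟩ := h
  have hcont_time : ContinuousOn (fun s => u s x) (Icc 0 T) :=
    hcont.comp (f := fun s => (s, x)) (by fun_prop) fun s hs => ⟨hs, sphere_subset_closedBall hx⟩
  have heq : EqOn (fun s => u s x) (fun _ => 0) (Ioc 0 T) := fun s hs => hsphere s hs x hx
  exact heq.of_subset_closure hcont_time continuousOn_const Ioc_subset_Icc_self
    (closure_Ioc hT.ne).ge ht

lemma continuous_zeroExtension (h : IsDirichletSol m x₀ R T u u₀) (hT : 0 < T) :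
    Continuous fun p : ℝ × 𝔼 d => zeroExtension x₀ R T u p.1 p.2 := by
  unfold zeroExtension
  refine continuous_if_le (f := fun p : ℝ × 𝔼 d => dist p.2 x₀) (g := fun _ => R)
    (f' := fun p : ℝ × 𝔼 d => u (max 0 (min T p.1)) p.2) (g' := fun _ => 0)
    (by fun_prop) (by fun_prop) ?_ continuousOn_const ?_
  · exact h.2.1.comp (f := fun p : ℝ × 𝔼 d => (max 0 (min T p.1), p.2)) (by fun_prop)
      fun p hp => ⟨clamp_mem_Icc hT.le _, mem_closedBall.2 hp⟩
  · exact fun p hp => h.eq_zero_of_mem_sphere hT (clamp_mem_Icc hT.le _) (mem_sphere.2 hp)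

lemma zeroExtension_nonneg (h : IsDirichletSol m x₀ R T u u₀) (hT : 0 ≤ T) (t : ℝ) (x : 𝔼 d) :
    0 ≤ zeroExtension x₀ R T u t x := by
  unfold zeroExtension
  split_ifs with hx
  · exact h.1 _ (clamp_mem_Icc hT t) _ (mem_closedBall.2 hx)
  · exact le_rfl

lemma zeroExtension_eq_zero (h : IsDirichletSol m x₀ R T u u₀) (hT : 0 < T) (t : ℝ) {x : 𝔼 d}
    (hx : x ∉ ball x₀ R) : zeroExtension x₀ R T u t x = 0 := by
  unfold zeroExtension
  split_ifs with hxR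
  · exact h.eq_zero_of_mem_sphere hT (clamp_mem_Icc hT.le t)
      (hxR.antisymm (not_lt.1 (mt mem_ball.2 hx)))
  · rfl

lemma zeroExtension_extinct (h : IsDirichletSol m x₀ R T u u₀) (hT : 0 ≤ T) (x : 𝔼 d) :
    zeroExtension x₀ R T u T x = 0 := by
  obtain ⟨-, -, -, -, -, hextinct, -⟩ := h
  unfold zeroExtension
  split_ifs with hx
  · rw [min_self, max_eq_right hT, hextinct x (mem_closedBall.2 hx)]
  · rfl

lemma zeroExtension_initial (h : IsDirichletSol m x₀ R T u u₀) (hT : 0 ≤ T) {x : 𝔼 d}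
    (hx : x ∈ ball x₀ R) : zeroExtension x₀ R T u 0 x = u₀ x := by
  obtain ⟨-, -, -, hinitial, -, -, -⟩ := h
  rw [zeroExtension_eq (left_mem_Icc.2 hT) (ball_subset_closedBall hx), hinitial x hx]

lemma setIntegral_zeroExtension_initial (h : IsDirichletSol m x₀ R T u u₀) (hT : 0 ≤ T)
    {s : Set (𝔼 d)} (hs : MeasurableSet s) (hsR : s ⊆ ball x₀ R) :
    ∫ x in s, zeroExtension x₀ R T u 0 x = ∫ x in s, u₀ x :=
  setIntegral_congr_fun hs fun _ hx => h.zeroExtension_initial hT (hsR hx)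

lemma deriv_zeroExtension_eq (h : IsDirichletSol m x₀ R T u u₀) {t : ℝ} (ht : t ∈ Ioo 0 T)
    {x : 𝔼 d} (hx : x ∈ ball x₀ R) :
    deriv (fun s => zeroExtension x₀ R T u s x) t =
      spaceLap (fun y => zeroExtension x₀ R T u t y ^ m) x := by
  obtain ⟨-, -, ⟨-, -, heqn⟩, -, -, -, -⟩ := h
  have hev := zeroExtension_eventuallyEq u ht hx
  have htime : (fun s => zeroExtension x₀ R T u s x) =ᶠ[𝓝 t] fun s => u s x :=
    (Continuous.prodMk_left x).continuousAt.eventually hev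
  have hspace : (fun y => zeroExtension x₀ R T u t y ^ m) =ᶠ[𝓝 x] fun y => u t y ^ m :=
    ((Continuous.prodMk_right t).continuousAt.eventually hev).mono fun y hy =>
      congrArg (· ^ m) hy
  rw [htime.deriv_eq, spaceLap_congr_of_eventuallyEq hspace]
  exact heqn (t, x) ⟨ht, hx⟩

theorem isExtendedSol_zeroExtension (h : IsDirichletSol m x₀ R T u u₀) (hm : 0 < m) (hR : 0 < R)
    (hT : 0 < T) : IsExtendedSol m (closedBall x₀ R) T (zeroExtension x₀ R T u) := by
  have hint : interior (closedBall x₀ R) = ball x₀ R := interior_closedBall x₀ hR.ne'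
  obtain ⟨-, -, ⟨hpos, hsmooth, -⟩, -⟩ := id h
  refine ⟨hm, hT, isCompact_closedBall x₀ R, h.continuous_zeroExtension hT,
    h.zeroExtension_nonneg hT.le, ?_, ?_, ?_, ?_, h.zeroExtension_extinct hT.le⟩ <;> rw [hint]
  · exact fun t x => h.zeroExtension_eq_zero hT t
  · intro t ht x hx
    rw [zeroExtension_eq (Ioo_subset_Icc_self ht) (ball_subset_closedBall hx)]
    exact hpos (t, x) ⟨ht, hx⟩
  · intro t ht x hx
    have hnhds := (isOpen_Ioo.prod isOpen_ball).mem_nhds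
      (show (t, x) ∈ Ioo 0 T ×ˢ ball x₀ R from ⟨ht, hx⟩)
    exact ((hsmooth.contDiffAt hnhds).of_le (WithTop.coe_le_coe.2 le_top)).congr_of_eventuallyEq
      (zeroExtension_eventuallyEq u ht hx)
  · exact fun t ht x hx => h.deriv_zeroExtension_eq ht hx

end IsDirichletSol

/-! ### Volumes of balls -/

/-- The Lebesgue measure of the unit ball of `ℝ^d`. -/
noncomputable def unitBallVolume (d : ℕ) : ℝ := volume.real (ball (0 : 𝔼 d) 1)

lemma unitBallVolume_pos (d : ℕ) : 0 < unitBallVolume d :=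
  ENNReal.toReal_pos (measure_ball_pos _ _ one_pos).ne' measure_ball_lt_top.ne

lemma volume_real_ball (x : 𝔼 d) {r : ℝ} (hr : 0 < r) :
    volume.real (ball x r) = r ^ d * unitBallVolume d := by
  rw [Measure.real, Measure.addHaar_ball_of_pos _ x hr, finrank_euclideanSpace_fin,
    ENNReal.toReal_mul, ENNReal.toReal_ofReal (by positivity), unitBallVolume, Measure.real]

lemma volume_real_closedBall_rpow (x : 𝔼 d) {r : ℝ} (hr : 0 ≤ r) (p : ℝ) :
    volume.real (closedBall x r) ^ p = r ^ (d * p) * unitBallVolume d ^ p := by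
  rw [Measure.addHaar_real_closedBall _ _ hr, finrank_euclideanSpace_fin, ← unitBallVolume,
    Real.mul_rpow (by positivity) (unitBallVolume_pos d).le, ← Real.rpow_natCast,
    ← Real.rpow_mul hr]

/-! ### Hölder interpolation -/

section Interpolation

variable {α : Type*} [MeasurableSpace α] {μ : Measure α}

lemma memLp_rpow_of_integrable {f : α → ℝ} (hf : Integrable f μ) (hf0 : ∀ x, 0 ≤ f x) {θ : ℝ}
    (hθ : 0 < θ) : MemLp (fun x => f x ^ θ) (ENNReal.ofReal (1 / θ)) μ := by
  have := (memLp_one_iff_integrable.2 hf).norm_rpow_div (ENNReal.ofReal θ)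
  simpa only [ENNReal.toReal_ofReal hθ.le, Real.norm_of_nonneg (hf0 _), one_div,
    ENNReal.ofReal_inv_of_pos hθ] using this

lemma integral_rpow_mul_rpow_le {f g : α → ℝ} (hf : Integrable f μ) (hg : Integrable g μ)
    (hf0 : ∀ x, 0 ≤ f x) (hg0 : ∀ x, 0 ≤ g x) {θ : ℝ} (hθ : θ ∈ Ioo 0 1) :
    ∫ x, f x ^ (1 - θ) * g x ^ θ ∂μ ≤ (∫ x, f x ∂μ) ^ (1 - θ) * (∫ x, g x ∂μ) ^ θ := by
  have hθ' : 0 < 1 - θ := sub_pos.2 hθ.2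
  have hconj : (1 / (1 - θ)).HolderConjugate (1 / θ) :=
    Real.holderConjugate_one_div hθ' hθ.1 (by ring)
  have := integral_mul_le_Lp_mul_Lq_of_nonneg hconj
    (ae_of_all _ fun x => Real.rpow_nonneg (hf0 x) _)
    (ae_of_all _ fun x => Real.rpow_nonneg (hg0 x) _)
    (memLp_rpow_of_integrable hf hf0 hθ') (memLp_rpow_of_integrable hg hg0 hθ.1)
  simpa only [← Real.rpow_mul (hf0 _), ← Real.rpow_mul (hg0 _), mul_one_div_cancel hθ'.ne',
    mul_one_div_cancel hθ.1.ne', Real.rpow_one, one_div_one_div] using this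

lemma integral_rpow_le_interpolate {f : α → ℝ} (hf0 : ∀ x, 0 ≤ f x) {a b c θ : ℝ} (ha : 0 ≤ a)
    (hc : 0 ≤ c) (hfa : Integrable (fun x => f x ^ a) μ) (hfc : Integrable (fun x => f x ^ c) μ)
    (hθ : θ ∈ Ioo 0 1) (hb : b = (1 - θ) * a + θ * c) :
    ∫ x, f x ^ b ∂μ ≤ (∫ x, f x ^ a ∂μ) ^ (1 - θ) * (∫ x, f x ^ c ∂μ) ^ θ := by
  have hθ' : 0 < 1 - θ := sub_pos.2 hθ.2
  have hsplit : ∀ x, f x ^ b = (f x ^ a) ^ (1 - θ) * (f x ^ c) ^ θ := fun x => by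
    rw [← Real.rpow_mul (hf0 x), ← Real.rpow_mul (hf0 x), hb, mul_comm _ a, mul_comm _ c,
      Real.rpow_add_of_nonneg (hf0 x) (mul_nonneg ha hθ'.le) (mul_nonneg hc hθ.1.le)]
  simp only [hsplit]
  exact integral_rpow_mul_rpow_le hfa hfc (fun x => Real.rpow_nonneg (hf0 x) a)
    (fun x => Real.rpow_nonneg (hf0 x) c) hθ

lemma setIntegral_rpow_le {f : α → ℝ} (hf0 : ∀ x, 0 ≤ f x) {K : Set α} (hK : μ K ≠ ⊤)
    (hf : IntegrableOn f K μ) {θ : ℝ} (hθ : θ ∈ Ioo 0 1) :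
    ∫ x in K, f x ^ θ ∂μ ≤ μ.real K ^ (1 - θ) * (∫ x in K, f x ∂μ) ^ θ := by
  have := integral_rpow_le_interpolate (μ := μ.restrict K) hf0 le_rfl zero_le_one
    (by simpa only [Real.rpow_zero, IntegrableOn] using integrableOn_const (C := (1 : ℝ)) hK)
    (by simpa only [Real.rpow_one, IntegrableOn] using hf) hθ (b := θ) (by ring)
  simpa only [Real.rpow_zero, Real.rpow_one, setIntegral_const, smul_eq_mul, mul_one] using this

end Interpolation

/-! ### The lower bound -/

lemma pow_le_pow_add_two_rpow {m v : ℝ} {k : ℕ} (hm : 0 < m) (hk : (k + 2) * m ≤ k) (hv : 0 ≤ v)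
    (hv1 : v ≤ 1) : v ^ k ≤ (v ^ (k + 2)) ^ m := by
  rcases hv.eq_or_lt with rfl | hpos
  · have hk0 : k ≠ 0 := by
      rintro rfl
      norm_num at hk
      linarith
    rw [zero_pow hk0]
    positivity
  · rw [← Real.rpow_natCast, ← Real.rpow_natCast, ← Real.rpow_mul hv]
    exact Real.rpow_le_rpow_of_exponent_ge hpos hv1 (by push_cast; exact hk)

lemma abs_spaceLap_pow_le {ψ : 𝔼 d → ℝ} (hψ : ContDiff ℝ 2 ψ) {x : 𝔼 d} (h0 : 0 ≤ ψ x)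
    (h1 : ψ x ≤ 1) {m : ℝ} {k : ℕ} (hm : 0 < m) (hk : (k + 2) * m ≤ k) :
    |spaceLap (fun y => ψ y ^ (k + 2)) x| ≤
      ((k + 2) * (k + 1) * ∑ i : Fin d, (fderiv ℝ ψ x (EuclideanSpace.single i 1)) ^ 2 +
        (k + 2) * |spaceLap ψ x|) * (ψ x ^ (k + 2)) ^ m := by
  have hderiv : ∀ y : ℝ, HasDerivAt (fun y => y ^ (k + 2)) ((k + 2) * y ^ (k + 1)) y := fun y => by
    simpa using hasDerivAt_pow (k + 2) y
  have hderiv2 : HasDerivAt (fun y : ℝ => (k + 2) * y ^ (k + 1)) ((k + 2) * ((k + 1) * ψ x ^ k))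
      (ψ x) := by
    simpa using (hasDerivAt_pow (k + 1) (ψ x)).const_mul ((k : ℝ) + 2)
  rw [spaceLap_comp hψ.contDiffAt (Eventually.of_forall hderiv) hderiv2]
  set S := ∑ i : Fin d, (fderiv ℝ ψ x (EuclideanSpace.single i 1)) ^ 2
  have : 0 ≤ S := Finset.sum_nonneg fun i _ => sq_nonneg _
  have hbase := pow_le_pow_add_two_rpow hm hk h0 h1
  have hbase' : ψ x ^ (k + 1) ≤ (ψ x ^ (k + 2)) ^ m :=
    (pow_le_pow_of_le_one h0 h1 (Nat.le_succ k)).trans hbase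
  calc _ ≤ |(k + 2) * ((k + 1) * ψ x ^ k) * S| + |(k + 2) * ψ x ^ (k + 1) * spaceLap ψ x| :=
        abs_add_le _ _
    _ = (k + 2) * ((k + 1) * ψ x ^ k) * S + (k + 2) * ψ x ^ (k + 1) * |spaceLap ψ x| := by
        rw [abs_mul _ (spaceLap ψ x), abs_of_nonneg (by positivity), abs_of_nonneg (by positivity)]
    _ ≤ (k + 2) * ((k + 1) * (ψ x ^ (k + 2)) ^ m) * S +
          (k + 2) * (ψ x ^ (k + 2)) ^ m * |spaceLap ψ x| := by gcongr
    _ = _ := by ring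

lemma exists_nat_add_two_mul_le {m : ℝ} (hm1 : m < 1) : ∃ k : ℕ, ((k : ℝ) + 2) * m ≤ k := by
  obtain ⟨k, hk⟩ := exists_nat_ge (2 * m / (1 - m))
  exact ⟨k, by linarith [(div_le_iff₀ (sub_pos.2 hm1)).1 hk]⟩

lemma continuous_sum_sq_fderiv {ψ : 𝔼 d → ℝ} (hψ : ContDiff ℝ 2 ψ) :
    Continuous fun x => ∑ i : Fin d, (fderiv ℝ ψ x (EuclideanSpace.single i 1)) ^ 2 :=
  continuous_finsetSum _ fun _ _ =>
    (((hψ.continuous_fderiv (by norm_num)).clm_apply continuous_const).pow 2)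

-- A high power of a bump function: near the edge of its support, two derivatives cost less than
-- raising to the power `m < 1` gains.
lemma exists_testFunction_unit (d : ℕ) {m : ℝ} (hm : 0 < m) (hm1 : m < 1) :
    ∃ (φ : 𝔼 d → ℝ) (C : ℝ), 0 < C ∧ ContDiff ℝ 2 φ ∧ (∀ x, 0 ≤ φ x) ∧
      (∀ x ∈ closedBall 0 (1 / 3), φ x = 1) ∧ (∀ x ∉ closedBall 0 (1 / 2), φ x = 0) ∧
      ∀ x, |spaceLap φ x| ≤ C * φ x ^ m := by
  let ψ : ContDiffBump (0 : 𝔼 d) := ⟨1 / 3, 1 / 2, by norm_num, by norm_num⟩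
  have hψ : ContDiff ℝ 2 ψ := ψ.contDiff
  obtain ⟨k, hk⟩ := exists_nat_add_two_mul_le hm1
  have hzero : ∀ x ∉ closedBall (0 : 𝔼 d) (1 / 2), ψ x ^ (k + 2) = 0 := fun x hx => by
    rw [ψ.zero_of_le_dist (not_le.1 (mt mem_closedBall.2 hx)).le, zero_pow (by omega)]
  obtain ⟨C, hC⟩ := (isCompact_closedBall (0 : 𝔼 d) (1 / 2)).exists_bound_of_continuousOn
    (((continuous_sum_sq_fderiv hψ).const_mul (((k : ℝ) + 2) * (k + 1))).add
      ((continuous_spaceLap hψ).abs.const_mul ((k : ℝ) + 2))).continuousOn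
  refine ⟨fun x => ψ x ^ (k + 2), |C| + 1, by positivity, hψ.pow _,
    fun x => pow_nonneg ψ.nonneg _, fun x hx => ?_, hzero, fun x => ?_⟩
  · simp only [ψ.one_of_mem_closedBall hx, one_pow]
  · have hpow : 0 ≤ (ψ x ^ (k + 2)) ^ m := Real.rpow_nonneg (pow_nonneg ψ.nonneg _) m
    by_cases hx : x ∈ closedBall (0 : 𝔼 d) (1 / 2)
    · refine (abs_spaceLap_pow_le hψ ψ.nonneg ψ.le_one hm hk).trans
        (mul_le_mul_of_nonneg_right ?_ hpow)
      exact ((le_abs_self _).trans (hC x hx)).trans (by linarith [le_abs_self C])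
    · have hev : (fun y => ψ y ^ (k + 2)) =ᶠ[𝓝 x] fun _ => 0 :=
        eventually_of_mem (isClosed_closedBall.isOpen_compl.mem_nhds hx) hzero
      rw [spaceLap_congr_of_eventuallyEq hev, spaceLap_const, abs_zero]
      positivity

lemma exists_testFunction (d : ℕ) {m : ℝ} (hm : 0 < m) (hm1 : m < 1) :
    ∃ C : ℝ, 0 < C ∧ ∀ (x₀ : 𝔼 d) (R : ℝ), 0 < R → ∃ φ : 𝔼 d → ℝ, ContDiff ℝ 2 φ ∧
      (∀ x, 0 ≤ φ x) ∧ (∀ x ∈ closedBall x₀ (R / 3), φ x = 1) ∧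
      (∀ x ∉ closedBall x₀ (R / 2), φ x = 0) ∧
      ∀ x, |spaceLap φ x| ≤ C * R⁻¹ ^ 2 * φ x ^ m := by
  obtain ⟨φ, C, hC, hφ, hφ0, hone, hzero, hLap⟩ := exists_testFunction_unit d hm hm1
  refine ⟨C, hC, fun x₀ R hR => ?_⟩
  have hnorm : ∀ x, ‖R⁻¹ • (x - x₀)‖ = dist x x₀ / R := fun x => by
    rw [norm_smul, dist_eq_norm, norm_inv, Real.norm_of_nonneg hR.le, inv_mul_eq_div]
  refine ⟨fun x => φ (R⁻¹ • (x - x₀)), hφ.comp (by fun_prop),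
    fun x => hφ0 _, fun x hx => hone _ ?_, fun x hx => hzero _ ?_, fun x => ?_⟩
  · rw [mem_closedBall_zero_iff, hnorm, div_le_iff₀ hR]
    linarith [mem_closedBall.1 hx]
  · rw [mem_closedBall_zero_iff, hnorm, div_le_iff₀ hR]
    exact fun hle => hx (mem_closedBall.2 (by linarith))
  · rw [spaceLap_comp_smul_sub hφ, abs_mul, abs_of_nonneg (sq_nonneg _)]
    calc R⁻¹ ^ 2 * |spaceLap φ (R⁻¹ • (x - x₀))|
        ≤ R⁻¹ ^ 2 * (C * φ (R⁻¹ • (x - x₀)) ^ m) := by gcongr; exact hLap _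
      _ = _ := by ring

namespace IsExtendedSol

variable {m T : ℝ} {K : Set (𝔼 d)} {U : ℝ → 𝔼 d → ℝ} {φ : 𝔼 d → ℝ} {C : ℝ}

lemma setIntegral_rpow_mul_neg_le (h : IsExtendedSol m K T U) (hm1 : m < 1)
    (hφ : ContDiff ℝ 2 φ) (hφ0 : ∀ x, 0 ≤ φ x) (hC : 0 ≤ C)
    (hLap : ∀ x, |spaceLap φ x| ≤ C * φ x ^ m) (t : ℝ) :
    ∫ x in K, U t x ^ m * -spaceLap φ x ≤
      C * (volume.real K ^ (1 - m) * (∫ x in K, U t x * φ x) ^ m) := by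
  have hUφ : Continuous fun x => U t x * φ x := (h.continuous_slice t).mul hφ.continuous
  have hUφ0 : ∀ x, 0 ≤ U t x * φ x := fun x => mul_nonneg (h.nonneg t x) (hφ0 x)
  calc _ ≤ ∫ x in K, C * (U t x * φ x) ^ m := by
        refine integral_mono ?_ ?_ fun x => ?_
        · exact ((h.continuous_rpow_slice h.exponent_pos.le t).mul
            (continuous_spaceLap hφ).neg).continuousOn.integrableOn_compact h.isCompact
        · exact ((hUφ.rpow_const fun _ => Or.inr h.exponent_pos.le).const_mul
            C).continuousOn.integrableOn_compact h.isCompact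
        · have hneg := (neg_le_abs _).trans (hLap x)
          calc U t x ^ m * -spaceLap φ x ≤ U t x ^ m * (C * φ x ^ m) :=
                mul_le_mul_of_nonneg_left hneg (Real.rpow_nonneg (h.nonneg t x) m)
            _ = C * (U t x * φ x) ^ m := by rw [Real.mul_rpow (h.nonneg t x) (hφ0 x)]; ring
    _ = C * ∫ x in K, (U t x * φ x) ^ m := integral_const_mul _ _
    _ ≤ _ := by
        gcongr
        exact setIntegral_rpow_le hUφ0 h.isCompact.measure_lt_top.ne
          (hUφ.continuousOn.integrableOn_compact h.isCompact) ⟨h.exponent_pos, hm1⟩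

theorem rpow_setIntegral_mul_le (h : IsExtendedSol m K T U) (hm1 : m < 1)
    (hφ : ContDiff ℝ 2 φ) (hφ0 : ∀ x, 0 ≤ φ x) {S : Set (𝔼 d)} (hS : IsCompact S)
    (hSK : S ⊆ interior K) (hzero : ∀ x ∉ S, φ x = 0) (hC : 0 ≤ C)
    (hLap : ∀ x, |spaceLap φ x| ≤ C * φ x ^ m) :
    (∫ x in K, U 0 x * φ x) ^ (1 - m) ≤ C * T * volume.real K ^ (1 - m) := by
  set z : ℝ → ℝ := fun t => ∫ x in K, U t x * φ x
  have hz0 : ∀ t, 0 ≤ z t := fun t => integral_nonneg fun x => mul_nonneg (h.nonneg t x) (hφ0 x)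
  have hzcont : Continuous z := continuous_setIntegral_mul h.continuous hφ.continuous h.isCompact
  obtain ⟨s, hs, hmax⟩ :=
    isCompact_Icc.exists_isMaxOn (nonempty_Icc.2 h.time_pos.le) hzcont.continuousOn
  have hz_le : z s ≤ C * T * volume.real K ^ (1 - m) * z s ^ m := by
    have hweak := h.weak_ineq_of_support_subset hφ.neg hS hSK
      (fun x hx => by simp only [hzero x hx, neg_zero]) hs.1 hs.2 le_rfl
    simp only [spaceLap_neg, h.extinct, zero_mul, integral_zero, mul_neg (U s _), integral_neg,
      zero_sub, neg_neg] at hweak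
    have hdissipation : ∀ t ∈ Icc s T, ∫ x in K, U t x ^ m * -spaceLap φ x ≤
        C * (volume.real K ^ (1 - m) * z s ^ m) := fun t ht =>
      (h.setIntegral_rpow_mul_neg_le hm1 hφ hφ0 hC hLap t).trans <| by
        gcongr
        · exact hz0 t
        · exact h.exponent_pos.le
        · exact hmax ⟨hs.1.trans ht.1, ht.2⟩
    have hint := intervalIntegral.integral_mono_on hs.2
      ((h.continuous_setIntegral_rpow_mul (continuous_spaceLap hφ).neg).intervalIntegrable s T)
      (intervalIntegrable_const (μ := volume)) hdissipation
    rw [intervalIntegral.integral_const, smul_eq_mul] at hint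
    calc z s ≤ (T - s) * (C * (volume.real K ^ (1 - m) * z s ^ m)) := hweak.trans hint
      _ ≤ T * (C * (volume.real K ^ (1 - m) * z s ^ m)) := by
          gcongr
          · have := hz0 s; positivity
          · linarith [hs.1]
      _ = _ := by ring
  refine (Real.rpow_le_rpow (hz0 0) (hmax (left_mem_Icc.2 h.time_pos.le)) (by linarith)).trans ?_
  rcases (hz0 s).eq_or_lt with hzero | hpos
  · rw [← hzero, Real.zero_rpow (by linarith)]
    have := h.time_pos.le
    positivity
  · rwa [Real.rpow_sub hpos, Real.rpow_one, div_le_iff₀ (by positivity)]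

end IsExtendedSol

theorem exists_mul_rpow_le_extinctionTime (d : ℕ) {m : ℝ} (hm : 0 < m) (hm1 : m < 1) :
    ∃ c : ℝ, 0 < c ∧ ∀ (x₀ : 𝔼 d) (R T : ℝ) (U : ℝ → 𝔼 d → ℝ), 0 < R →
      IsExtendedSol m (closedBall x₀ R) T U →
      c * (∫ x in ball x₀ (R / 3), U 0 x) ^ (1 - m) * R ^ (2 - d * (1 - m)) ≤ T := by
  obtain ⟨C, hC, htest⟩ := exists_testFunction d hm hm1
  have hω := unitBallVolume_pos d
  refine ⟨1 / (C * unitBallVolume d ^ (1 - m)), by positivity, fun x₀ R T U hR h => ?_⟩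
  obtain ⟨φ, hφ, hφ0, hone, hzero, hLap⟩ := htest x₀ R hR
  have hbound := h.rpow_setIntegral_mul_le hm1 hφ hφ0 (isCompact_closedBall x₀ (R / 2))
    (by rw [interior_closedBall x₀ hR.ne']; exact closedBall_subset_ball (by linarith)) hzero
    (by positivity) hLap
  have hmass : ∫ x in ball x₀ (R / 3), U 0 x ≤ ∫ x in closedBall x₀ R, U 0 x * φ x := by
    rw [← setIntegral_congr_fun (f := fun x => U 0 x * φ x) measurableSet_ball fun x hx => by
      simp only [hone x (ball_subset_closedBall hx), mul_one]]
    exact setIntegral_mono_set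
      (((h.continuous_slice 0).mul hφ.continuous).continuousOn.integrableOn_compact h.isCompact)
      (ae_of_all _ fun x => mul_nonneg (h.nonneg 0 x) (hφ0 x))
      (ball_subset_closedBall.trans (closedBall_subset_closedBall (by linarith))).eventuallyLE
  have hrpow := (Real.rpow_le_rpow (integral_nonneg (h.nonneg 0)) hmass (by linarith)).trans hbound
  rw [volume_real_closedBall_rpow x₀ hR.le] at hrpow
  calc _ = (∫ x in ball x₀ (R / 3), U 0 x) ^ (1 - m) *
          (R ^ 2 / (C * unitBallVolume d ^ (1 - m) * R ^ (d * (1 - m)))) := by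
        rw [Real.rpow_sub hR, Real.rpow_two]; field_simp
    _ ≤ C * R⁻¹ ^ 2 * T * (R ^ (d * (1 - m)) * unitBallVolume d ^ (1 - m)) *
          (R ^ 2 / (C * unitBallVolume d ^ (1 - m) * R ^ (d * (1 - m)))) := by gcongr
    _ = T := by field_simp

/-! ### Regularised Newtonian kernels -/

/-- The Newtonian kernel `‖z‖^(2 - d)` regularised at scale `ε`, up to a dimensional constant. -/
noncomputable def newtonKernel (ε : ℝ) (z : 𝔼 d) : ℝ := (ε ^ 2 + ‖z‖ ^ 2) ^ ((2 - d : ℝ) / 2)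

/-- A dimensional lower bound for the mass that `-Δ (newtonKernel ε)` puts on the ball of radius
`ε`, uniform in `ε`. -/
noncomputable def newtonConst (d : ℕ) : ℝ :=
  d * (d - 2) * 2 ^ (-(d + 2 : ℝ) / 2) * unitBallVolume d

lemma newtonConst_nonneg (hd : 2 ≤ d) : 0 ≤ newtonConst d := by
  have hd' : (0 : ℝ) ≤ d - 2 := sub_nonneg.2 (mod_cast hd)
  have := unitBallVolume_pos d
  unfold newtonConst
  positivity

lemma newtonConst_pos (hd : 2 < d) : 0 < newtonConst d := by
  have hd' : (0 : ℝ) < d - 2 := sub_pos.2 (mod_cast hd)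
  have : (0 : ℝ) < d := by linarith
  have := unitBallVolume_pos d
  unfold newtonConst
  positivity

lemma fderiv_const_add_norm_sq_single (c : ℝ) (z : 𝔼 d) (i : Fin d) :
    fderiv ℝ (fun z : 𝔼 d => c + ‖z‖ ^ 2) z (EuclideanSpace.single i 1) = 2 * z i := by
  rw [fderiv_const_add, fderiv_norm_sq_apply]
  simp [EuclideanSpace.inner_single_right]

lemma spaceLap_const_add_norm_sq (c : ℝ) (z : 𝔼 d) :
    spaceLap (fun z : 𝔼 d => c + ‖z‖ ^ 2) z = 2 * d := by
  have hcoord : ∀ i : Fin d,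
      fderiv ℝ (fun y : 𝔼 d => 2 * y i) z (EuclideanSpace.single i 1) = 2 := fun i => by
    have hlin : HasFDerivAt (fun y : 𝔼 d => 2 * y i)
        ((2 : ℝ) • (EuclideanSpace.proj i : 𝔼 d →L[ℝ] ℝ)) z :=
      ((2 : ℝ) • (EuclideanSpace.proj i : 𝔼 d →L[ℝ] ℝ)).hasFDerivAt
    simp [hlin.fderiv]
  simp only [spaceLap, fderiv_const_add_norm_sq_single, hcoord, Finset.sum_const,
    Finset.card_univ, Fintype.card_fin, nsmul_eq_mul, mul_comm]

lemma contDiff_const_add_norm_sq_rpow {c : ℝ} (hc : 0 < c) (a : ℝ) :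
    ContDiff ℝ 2 fun z : 𝔼 d => (c + ‖z‖ ^ 2) ^ a :=
  (contDiff_const.add (contDiff_norm_sq ℝ)).rpow_const_of_ne fun z => by positivity

lemma spaceLap_const_add_norm_sq_rpow {c : ℝ} (hc : 0 < c) (a : ℝ) (z : 𝔼 d) :
    spaceLap (fun z : 𝔼 d => (c + ‖z‖ ^ 2) ^ a) z =
      2 * a * (d * (c + ‖z‖ ^ 2) + 2 * (a - 1) * ‖z‖ ^ 2) * (c + ‖z‖ ^ 2) ^ (a - 2) := by
  have hbase : 0 < c + ‖z‖ ^ 2 := by positivity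
  have hderiv : ∀ᶠ r in 𝓝 (c + ‖z‖ ^ 2), HasDerivAt (fun r => r ^ a) (a * r ^ (a - 1)) r := by
    filter_upwards [lt_mem_nhds hbase] with r hr
    exact Real.hasDerivAt_rpow_const (Or.inl hr.ne')
  have hderiv2 : HasDerivAt (fun r => a * r ^ (a - 1))
      (a * ((a - 1) * (c + ‖z‖ ^ 2) ^ (a - 2))) (c + ‖z‖ ^ 2) := by
    rw [show a - 2 = a - 1 - 1 by ring]
    exact (Real.hasDerivAt_rpow_const (Or.inl hbase.ne')).const_mul a
  have hgrad : ∑ i, (2 * z i) ^ 2 = 4 * ‖z‖ ^ 2 := by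
    simp only [EuclideanSpace.norm_sq_eq, Finset.mul_sum, Real.norm_eq_abs, sq_abs]
    exact Finset.sum_congr rfl fun i _ => by ring
  have hpow : (c + ‖z‖ ^ 2) ^ (a - 1) = (c + ‖z‖ ^ 2) ^ (a - 2) * (c + ‖z‖ ^ 2) := by
    rw [← Real.rpow_add_one hbase.ne', show a - 2 + 1 = a - 1 by ring]
  rw [spaceLap_comp (f := fun z : 𝔼 d => c + ‖z‖ ^ 2)
    (contDiff_const.add (contDiff_norm_sq ℝ)).contDiffAt hderiv hderiv2,
    spaceLap_const_add_norm_sq]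
  simp only [fderiv_const_add_norm_sq_single, hgrad, hpow]
  ring

lemma newtonKernel_nonneg (ε : ℝ) (z : 𝔼 d) : 0 ≤ newtonKernel ε z := by
  unfold newtonKernel
  positivity

lemma newtonKernel_sub_comm (ε : ℝ) (x y : 𝔼 d) :
    newtonKernel ε (x - y) = newtonKernel ε (y - x) := by
  rw [newtonKernel, newtonKernel, norm_sub_rev]

lemma contDiff_newtonKernel {ε : ℝ} (hε : 0 < ε) :
    ContDiff ℝ 2 (newtonKernel ε : 𝔼 d → ℝ) :=
  contDiff_const_add_norm_sq_rpow (by positivity) _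

lemma continuous_newtonKernel {ε : ℝ} (hε : 0 < ε) : Continuous (newtonKernel ε : 𝔼 d → ℝ) :=
  (contDiff_newtonKernel hε).continuous

lemma spaceLap_newtonKernel_sub {ε : ℝ} (hε : 0 < ε) (x y : 𝔼 d) :
    spaceLap (fun x => newtonKernel ε (x - y)) x =
      -(d * (d - 2) * ε ^ 2 * (ε ^ 2 + ‖x - y‖ ^ 2) ^ (-(d + 2 : ℝ) / 2)) := by
  have htranslate := spaceLap_comp_smul_sub (contDiff_newtonKernel hε) 1 y x
  simp only [one_smul, one_pow, one_mul] at htranslate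
  rw [htranslate]
  unfold newtonKernel
  rw [spaceLap_const_add_norm_sq_rpow (by positivity),
    show (2 - d : ℝ) / 2 - 2 = -(d + 2) / 2 by ring]
  ring

lemma spaceLap_newtonKernel_sub_nonpos (hd : 2 ≤ d) {ε : ℝ} (hε : 0 < ε) (x y : 𝔼 d) :
    spaceLap (fun x => newtonKernel ε (x - y)) x ≤ 0 := by
  have hd' : (0 : ℝ) ≤ d - 2 := sub_nonneg.2 (mod_cast hd)
  rw [spaceLap_newtonKernel_sub hε, neg_nonpos]
  positivity

lemma rpow_sq_add_sq_le {ε r ρ p : ℝ} (hr : 0 < r) (hρ : r ≤ ρ) (hp : p ≤ 0) :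
    (ε ^ 2 + ρ ^ 2) ^ (p / 2) ≤ r ^ p := by
  have hsq : r ^ p = (r ^ 2) ^ (p / 2) := by
    rw [← Real.rpow_natCast, ← Real.rpow_mul hr.le]
    congr 1
    push_cast
    ring
  rw [hsq]
  exact Real.rpow_le_rpow_of_nonpos (by positivity) (by nlinarith [sq_nonneg ε]) (by linarith)

lemma newtonKernel_le (hd : 2 ≤ d) {ε r : ℝ} (hr : 0 < r) {z : 𝔼 d} (hz : r ≤ ‖z‖) :
    newtonKernel ε z ≤ r ^ (2 - d : ℝ) :=
  rpow_sq_add_sq_le hr hz (sub_nonpos.2 (mod_cast hd))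

lemma spaceLap_newtonKernel_sub_mul_volume_le (hd : 2 ≤ d) {ε : ℝ} {x y : 𝔼 d}
    (hx : x ∈ ball y ε) :
    spaceLap (fun x => newtonKernel ε (x - y)) x * volume.real (ball y ε) ≤ -newtonConst d := by
  have hd' : (0 : ℝ) ≤ d - 2 := sub_nonneg.2 (mod_cast hd)
  have hω := unitBallVolume_pos d
  have hε : 0 < ε := pos_of_mem_ball hx
  have hbase : ε ^ 2 + ‖x - y‖ ^ 2 ≤ 2 * ε ^ 2 := by
    have : ‖x - y‖ ≤ ε := (dist_eq_norm x y ▸ mem_ball.1 hx).le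
    nlinarith [norm_nonneg (x - y)]
  have hpow : (2 : ℝ) ^ (-(d + 2 : ℝ) / 2) ≤
      (ε ^ 2 + ‖x - y‖ ^ 2) ^ (-(d + 2 : ℝ) / 2) * (ε ^ 2 * ε ^ d) := by
    have hscale : (ε ^ 2) ^ (-(d + 2 : ℝ) / 2) * (ε ^ 2 * ε ^ d) = 1 := by
      rw [← Real.rpow_natCast ε 2, ← Real.rpow_natCast ε d, ← Real.rpow_mul hε.le,
        ← Real.rpow_add hε, ← Real.rpow_add hε,
        show ((2 : ℕ) : ℝ) * (-(d + 2) / 2) + ((2 : ℕ) + d) = 0 by push_cast; ring, Real.rpow_zero]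
    calc _ = (2 * ε ^ 2) ^ (-(d + 2 : ℝ) / 2) * (ε ^ 2 * ε ^ d) := by
          rw [Real.mul_rpow (by norm_num) (by positivity), mul_assoc, hscale, mul_one]
      _ ≤ _ := by
          have hexp : -(d + 2 : ℝ) / 2 ≤ 0 := by linarith
          exact mul_le_mul_of_nonneg_right
            (Real.rpow_le_rpow_of_nonpos (by positivity) hbase hexp) (by positivity)
  rw [spaceLap_newtonKernel_sub hε, volume_real_ball y hε, newtonConst]
  have := mul_le_mul_of_nonneg_left hpow
    (show 0 ≤ d * (d - 2 : ℝ) * unitBallVolume d by positivity)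
  linarith

lemma setIntegral_mul_spaceLap_newtonKernel_le (hd : 2 ≤ d) {K : Set (𝔼 d)} (hK : IsCompact K)
    {w : 𝔼 d → ℝ} (hw : Continuous w) (hw0 : ∀ x, 0 ≤ w x) (hwK : ∀ x ∉ K, w x = 0) {ε a : ℝ}
    (hε : 0 < ε) {y : 𝔼 d} (ha : ∀ x ∈ ball y ε, a ≤ w x) :
    ∫ x in K, w x * spaceLap (fun x => newtonKernel ε (x - y)) x ≤ -(newtonConst d * a) := by
  set Δk := spaceLap fun x : 𝔼 d => newtonKernel ε (x - y)
  have hΔk : Continuous Δk :=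
    continuous_spaceLap ((contDiff_newtonKernel hε).comp (contDiff_id.sub contDiff_const))
  have hint : Integrable fun x => w x * Δk x :=
    (hw.mul hΔk).integrable_of_hasCompactSupport
      (HasCompactSupport.intro hK fun x hx => mul_eq_zero_of_left (hwK x hx) _)
  have hV : 0 < volume.real (ball y ε) :=
    ENNReal.toReal_pos (measure_ball_pos _ _ hε).ne' measure_ball_lt_top.ne
  have hconst : -newtonConst d / volume.real (ball y ε) ≤ 0 :=
    div_nonpos_of_nonpos_of_nonneg (neg_nonpos.2 (newtonConst_nonneg hd)) hV.le
  calc ∫ x in K, w x * Δk x = ∫ x, w x * Δk x :=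
        setIntegral_eq_integral_of_forall_compl_eq_zero fun x hx => by rw [hwK x hx, zero_mul]
    _ ≤ ∫ x in ball y ε, w x * Δk x := by
        have := setIntegral_le_integral hint.neg (s := ball y ε) (ae_of_all _ fun x =>
          neg_nonneg.2 (mul_nonpos_of_nonneg_of_nonpos (hw0 x)
            (spaceLap_newtonKernel_sub_nonpos hd hε x y)))
        simpa only [Pi.neg_apply, integral_neg, neg_le_neg_iff] using this
    _ ≤ ∫ _ in ball y ε, a * (-newtonConst d / volume.real (ball y ε)) := by
        refine setIntegral_mono_on hint.integrableOn
          (integrableOn_const measure_ball_lt_top.ne) measurableSet_ball fun x hx => ?_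
        have hΔk_le : Δk x ≤ -newtonConst d / volume.real (ball y ε) :=
          (le_div_iff₀ hV).2 (spaceLap_newtonKernel_sub_mul_volume_le hd hx)
        exact (mul_le_mul_of_nonneg_left hΔk_le (hw0 x)).trans
          (mul_le_mul_of_nonpos_right (ha x hx) hconst)
    _ = _ := by
        rw [setIntegral_const, smul_eq_mul]
        field_simp

lemma pow_mul_rpow_sq_add_sq_le (hd : 2 ≤ d) (ε : ℝ) {ρ : ℝ} (hρ : 0 < ρ) :
    ρ ^ (d - 1) * (ε ^ 2 + ρ ^ 2) ^ ((2 - d : ℝ) / 2) ≤ ρ := by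
  calc _ ≤ ρ ^ (d - 1) * ρ ^ (2 - d : ℝ) := by
        gcongr
        exact rpow_sq_add_sq_le hρ le_rfl (sub_nonpos.2 (mod_cast hd))
    _ = ρ ^ (1 : ℝ) := by
        rw [← Real.rpow_natCast, ← Real.rpow_add hρ, Nat.cast_sub (by omega)]
        congr 1
        push_cast
        ring
    _ = ρ := Real.rpow_one ρ

lemma setIntegral_ball_newtonKernel_le (hd : 2 ≤ d) (ε : ℝ) {r : ℝ} (hr : 0 ≤ r) (y : 𝔼 d) :
    ∫ x in ball y r, newtonKernel ε (x - y) ≤ d * unitBallVolume d * r ^ 2 := by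
  have : Nonempty (Fin d) := ⟨⟨0, by omega⟩⟩
  have hω := unitBallVolume_pos d
  set radial : ℝ → ℝ := fun ρ => (ε ^ 2 + ρ ^ 2) ^ ((2 - d : ℝ) / 2) with hradial
  have hpolar : ∫ x in ball y r, newtonKernel ε (x - y) =
      d * unitBallVolume d * ∫ ρ in Ioo 0 r, ρ ^ (d - 1) * radial ρ := by
    have hmul : ∀ ρ, ρ ^ (d - 1) * (Iio r).indicator radial ρ =
        (Iio r).indicator (fun ρ => ρ ^ (d - 1) * radial ρ) ρ := fun ρ =>
      (indicator_mul_right (Iio r) _ _).symm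
    have hint := integral_fun_norm_addHaar (volume : Measure (𝔼 d)) ((Iio r).indicator radial)
    simp only [finrank_euclideanSpace_fin, nsmul_eq_mul, smul_eq_mul, hmul,
      setIntegral_indicator measurableSet_Iio, Ioi_inter_Iio] at hint
    rw [mul_assoc, unitBallVolume, ← hint, ← integral_indicator measurableSet_ball,
      ← integral_sub_right_eq_self (fun z : 𝔼 d => (Iio r).indicator radial ‖z‖) y]
    simp only [indicator, mem_ball, dist_eq_norm, mem_Iio, newtonKernel, hradial]
  have hbound : ∀ ρ ∈ Ioo 0 r, ‖ρ ^ (d - 1) * radial ρ‖ ≤ r := fun ρ hρ => by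
    rw [Real.norm_of_nonneg (mul_nonneg (pow_nonneg hρ.1.le _) (by positivity))]
    exact (pow_mul_rpow_sq_add_sq_le hd ε hρ.1).trans hρ.2.le
  have hle := (le_abs_self _).trans
    (norm_setIntegral_le_of_norm_le_const (μ := volume) measure_Ioo_lt_top hbound)
  rw [Real.volume_real_Ioo_of_le hr, sub_zero, ← sq] at hle
  rw [hpolar]
  gcongr

/-! ### Newtonian energy -/

/-- The regularised Newtonian potential at `y` of the density `f` on `K`. -/
noncomputable def newtonPotential (K : Set (𝔼 d)) (ε : ℝ) (f : 𝔼 d → ℝ) (y : 𝔼 d) : ℝ :=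
  ∫ x in K, f x * newtonKernel ε (x - y)

/-- The self-interaction energy of the density `f` on `K` for the regularised Newtonian kernel. It
is the Lyapunov functional whose dissipation controls `∫ U ^ (1 + m)`. -/
noncomputable def newtonEnergy (K : Set (𝔼 d)) (ε : ℝ) (f : 𝔼 d → ℝ) : ℝ :=
  ∫ y in K, f y * newtonPotential K ε f y

section NewtonEnergy

variable {K : Set (𝔼 d)} {ε : ℝ} {f g : 𝔼 d → ℝ}

lemma setIntegral_setIntegral_swap (hK : IsCompact K) {F : 𝔼 d → 𝔼 d → ℝ}
    (hF : Continuous fun p : 𝔼 d × 𝔼 d => F p.1 p.2) :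
    ∫ y in K, ∫ x in K, F y x = ∫ y in K, ∫ x in K, F x y :=
  integral_integral_swap <| by
    rw [Measure.prod_restrict]
    exact hF.continuousOn.integrableOn_compact (hK.prod hK)

lemma continuous_newtonKernel_sub (hε : 0 < ε) :
    Continuous fun p : 𝔼 d × 𝔼 d => newtonKernel ε (p.2 - p.1) :=
  (continuous_newtonKernel hε).comp (continuous_snd.sub continuous_fst)

lemma continuous_newtonPotential_uncurry (hK : IsCompact K) (hε : 0 < ε) {F : ℝ → 𝔼 d → ℝ}
    (hF : Continuous fun p : ℝ × 𝔼 d => F p.1 p.2) :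
    Continuous fun p : ℝ × 𝔼 d => newtonPotential K ε (F p.1) p.2 := by
  have hFx : Continuous fun q : (ℝ × 𝔼 d) × 𝔼 d => F q.1.1 q.2 :=
    hF.comp (f := fun q : (ℝ × 𝔼 d) × 𝔼 d => (q.1.1, q.2)) (by fun_prop)
  have hkernel : Continuous fun q : (ℝ × 𝔼 d) × 𝔼 d => newtonKernel ε (q.2 - q.1.2) :=
    (continuous_newtonKernel hε).comp (by fun_prop)
  exact continuous_parametric_integral_of_continuous
    (f := fun (p : ℝ × 𝔼 d) x => F p.1 x * newtonKernel ε (x - p.2)) (hFx.mul hkernel) hK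

lemma continuous_newtonPotential (hK : IsCompact K) (hε : 0 < ε) (hf : Continuous f) :
    Continuous (newtonPotential K ε f) :=
  (continuous_newtonPotential_uncurry hK hε (F := fun _ => f) (hf.comp continuous_snd)).comp
    (f := fun y : 𝔼 d => ((0 : ℝ), y)) (by fun_prop)

lemma setIntegral_mul_newtonPotential_comm (hK : IsCompact K) (hε : 0 < ε) (hf : Continuous f)
    (hg : Continuous g) :
    ∫ y in K, f y * newtonPotential K ε g y = ∫ y in K, g y * newtonPotential K ε f y := by
  simp only [newtonPotential, ← integral_const_mul]
  rw [setIntegral_setIntegral_swap hK ((hf.comp continuous_fst).mul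
    ((hg.comp continuous_snd).mul (continuous_newtonKernel_sub hε)))]
  refine integral_congr_ae (.of_forall fun x => integral_congr_ae (.of_forall fun y => ?_))
  simp only [newtonKernel_sub_comm ε x y, mul_left_comm]

lemma newtonEnergy_sub (hK : IsCompact K) (hε : 0 < ε) (hf : Continuous f) (hg : Continuous g) :
    newtonEnergy K ε g - newtonEnergy K ε f =
      ∫ y in K, (g y + f y) * (newtonPotential K ε g y - newtonPotential K ε f y) := by
  have hint : ∀ {p q : 𝔼 d → ℝ}, Continuous p → Continuous q →
      IntegrableOn (fun y => p y * newtonPotential K ε q y) K := fun hp hq =>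
    (hp.mul (continuous_newtonPotential hK hε hq)).continuousOn.integrableOn_compact hK
  have hexpand : ∀ y, (g y + f y) * (newtonPotential K ε g y - newtonPotential K ε f y) =
      (g y * newtonPotential K ε g y - g y * newtonPotential K ε f y) +
        (f y * newtonPotential K ε g y - f y * newtonPotential K ε f y) := fun y => by ring
  simp only [hexpand]
  rw [integral_add, integral_sub (hint hg hg) (hint hg hf), integral_sub (hint hf hg) (hint hf hf),
    setIntegral_mul_newtonPotential_comm hK hε hf hg, newtonEnergy, newtonEnergy]
  · ring
  · exact (hint hg hg).sub (hint hg hf)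
  · exact (hint hf hg).sub (hint hf hf)

lemma setIntegral_min_mul_newtonKernel_le (hd : 2 ≤ d) (hK : IsCompact K) (hε : 0 < ε)
    (hf : Continuous f) (hf0 : ∀ x, 0 ≤ f x) {a r : ℝ} (ha : 0 ≤ a) (hr : 0 < r) (y : 𝔼 d) :
    ∫ x in K, min a (f x) * newtonKernel ε (x - y) ≤
      a * (d * unitBallVolume d * r ^ 2) + r ^ (2 - d : ℝ) * ∫ x in K, f x := by
  have hk : Continuous fun x => newtonKernel ε (x - y) :=
    (continuous_newtonKernel hε).comp (continuous_id.sub continuous_const)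
  set near : 𝔼 d → ℝ := (ball y r).indicator fun x => a * newtonKernel ε (x - y) with hnear_def
  have hsplit : ∀ x, min a (f x) * newtonKernel ε (x - y) ≤ near x + r ^ (2 - d : ℝ) * f x := by
    intro x
    have hk0 := newtonKernel_nonneg ε (x - y)
    by_cases hx : x ∈ ball y r
    · have hfar : 0 ≤ r ^ (2 - d : ℝ) * f x := mul_nonneg (by positivity) (hf0 x)
      rw [hnear_def, indicator_of_mem hx]
      exact (mul_le_mul_of_nonneg_right (min_le_left _ _) hk0).trans (le_add_of_nonneg_right hfar)
    · rw [hnear_def, indicator_of_notMem hx, zero_add, mul_comm]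
      rw [mem_ball, dist_eq_norm, not_lt] at hx
      exact mul_le_mul (newtonKernel_le hd hr hx) (min_le_right _ _) (le_min ha (hf0 x))
        (by positivity)
  have hnear : Integrable near := by
    rw [integrable_indicator_iff measurableSet_ball]
    exact ((continuous_const.mul hk).continuousOn.integrableOn_compact
      (isCompact_closedBall y r)).mono_set ball_subset_closedBall
  have hfar : IntegrableOn (fun x => r ^ (2 - d : ℝ) * f x) K :=
    (continuous_const.mul hf).continuousOn.integrableOn_compact hK
  have hnear_le : ∫ x in K, near x ≤ a * (d * unitBallVolume d * r ^ 2) := by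
    refine (setIntegral_le_integral hnear (.of_forall (indicator_nonneg fun x _ =>
      mul_nonneg ha (newtonKernel_nonneg _ _)))).trans ?_
    rw [integral_indicator measurableSet_ball, integral_const_mul]
    exact mul_le_mul_of_nonneg_left (setIntegral_ball_newtonKernel_le hd ε hr.le y) ha
  calc _ ≤ ∫ x in K, (near x + r ^ (2 - d : ℝ) * f x) :=
        integral_mono (((continuous_const.min hf).mul hk).continuousOn.integrableOn_compact hK)
          (hnear.integrableOn.add hfar) hsplit
    _ ≤ _ := by
        rw [integral_add hnear.integrableOn hfar, integral_const_mul]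
        gcongr

lemma setIntegral_min_mul_newtonKernel_le_rpow (hd : 2 ≤ d) (hK : IsCompact K) (hε : 0 < ε)
    (hf : Continuous f) (hf0 : ∀ x, 0 ≤ f x) (hfK : 0 < ∫ x in K, f x) {a : ℝ} (ha : 0 ≤ a)
    (y : 𝔼 d) :
    ∫ x in K, min a (f x) * newtonKernel ε (x - y) ≤
      (d * unitBallVolume d + 1) * (∫ x in K, f x) ^ (2 / d : ℝ) * a ^ (1 - 2 / d : ℝ) := by
  have hω := unitBallVolume_pos d
  have hd0 : (d : ℝ) ≠ 0 := by positivity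
  set M := ∫ x in K, f x
  rcases ha.eq_or_lt with rfl | ha
  · simp only [min_eq_left (hf0 _), zero_mul, integral_zero]
    positivity
  -- This radius balances the two terms of `setIntegral_min_mul_newtonKernel_le`.
  set r := (M / a) ^ (1 / d : ℝ) with hr
  have hr0 : 0 < r := by positivity
  have hrd : r ^ (d : ℝ) = M / a := by
    rw [hr, ← Real.rpow_mul (by positivity), one_div_mul_cancel hd0, Real.rpow_one]
  have hr2 : r ^ 2 = (M / a) ^ (2 / d : ℝ) := by
    rw [hr, ← Real.rpow_natCast, ← Real.rpow_mul (by positivity)]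
    congr 1
    push_cast
    ring
  have hnear : a * r ^ 2 = M ^ (2 / d : ℝ) * a ^ (1 - 2 / d : ℝ) := by
    rw [hr2, Real.div_rpow hfK.le ha.le, Real.rpow_sub ha, Real.rpow_one]
    field_simp
  have hfar : r ^ (2 - d : ℝ) * M = a * r ^ 2 := by
    rw [Real.rpow_sub hr0, hrd, Real.rpow_two]
    field_simp
  calc _ ≤ a * (d * unitBallVolume d * r ^ 2) + r ^ (2 - d : ℝ) * M :=
        setIntegral_min_mul_newtonKernel_le hd hK hε hf hf0 ha.le hr0 y
    _ = (d * unitBallVolume d + 1) * (a * r ^ 2) := by rw [hfar]; ring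
    _ = _ := by rw [hnear, mul_assoc]

lemma mul_le_add_mul_min {a b : ℝ} (ha : 0 ≤ a) (hb : 0 ≤ b) : a * b ≤ (a + b) * min a b := by
  rcases le_total a b with h | h
  · rw [min_eq_left h]
    nlinarith
  · rw [min_eq_right h]
    nlinarith

lemma newtonEnergy_le_setIntegral_min (hK : IsCompact K) (hε : 0 < ε) (hf : Continuous f)
    (hf0 : ∀ x, 0 ≤ f x) :
    newtonEnergy K ε f ≤
      2 * ∫ y in K, f y * ∫ x in K, min (f y) (f x) * newtonKernel ε (x - y) := by
  set F : 𝔼 d → 𝔼 d → ℝ := fun y x => f y * (min (f y) (f x) * newtonKernel ε (x - y)) with hFdef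
  have hk := continuous_newtonKernel_sub (d := d) hε
  have hfst : Continuous fun p : 𝔼 d × 𝔼 d => f p.1 := hf.comp continuous_fst
  have hsnd : Continuous fun p : 𝔼 d × 𝔼 d => f p.2 := hf.comp continuous_snd
  have hF : Continuous fun p : 𝔼 d × 𝔼 d => F p.1 p.2 := hfst.mul ((hfst.min hsnd).mul hk)
  have hF' : Continuous fun p : 𝔼 d × 𝔼 d => F p.2 p.1 := hF.comp continuous_swap
  have hinner : ∀ {G : 𝔼 d → 𝔼 d → ℝ}, Continuous (fun p : 𝔼 d × 𝔼 d => G p.1 p.2) →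
      ∀ y, IntegrableOn (G y) K := fun hG y =>
    (hG.comp (f := fun x => (y, x)) (by fun_prop)).continuousOn.integrableOn_compact hK
  have houter : ∀ {G : 𝔼 d → 𝔼 d → ℝ}, Continuous (fun p : 𝔼 d × 𝔼 d => G p.1 p.2) →
      IntegrableOn (fun y => ∫ x in K, G y x) K := fun hG =>
    (continuous_parametric_integral_of_continuous hG hK).continuousOn.integrableOn_compact hK
  have hpointwise : ∀ y x, f y * (f x * newtonKernel ε (x - y)) ≤ F y x + F x y := fun y x => by
    have := mul_le_mul_of_nonneg_right (mul_le_add_mul_min (hf0 y) (hf0 x))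
      (newtonKernel_nonneg ε (x - y))
    simp only [hFdef, newtonKernel_sub_comm ε y x, min_comm (f x) (f y)]
    linarith
  calc newtonEnergy K ε f = ∫ y in K, ∫ x in K, f y * (f x * newtonKernel ε (x - y)) := by
        simp only [newtonEnergy, newtonPotential, integral_const_mul]
    _ ≤ ∫ y in K, ∫ x in K, (F y x + F x y) :=
        integral_mono (houter (G := fun y x => f y * (f x * newtonKernel ε (x - y)))
          (hfst.mul (hsnd.mul hk))) (houter (G := fun y x => F y x + F x y) (hF.add hF')) fun y =>
          integral_mono (hinner (G := fun y x => f y * (f x * newtonKernel ε (x - y)))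
            (hfst.mul (hsnd.mul hk)) y)
            (hinner (G := fun y x => F y x + F x y) (hF.add hF') y) (hpointwise y)
    _ = (∫ y in K, ∫ x in K, F y x) + ∫ y in K, ∫ x in K, F x y := by
        simp only [integral_add (hinner hF _) (hinner (G := fun y x => F x y) hF' _)]
        exact integral_add (houter hF) (houter (G := fun y x => F x y) hF')
    _ = _ := by
        rw [← setIntegral_setIntegral_swap hK hF, ← two_mul]
        simp only [hFdef, integral_const_mul]

lemma newtonEnergy_le (hd : 2 ≤ d) (hK : IsCompact K) (hε : 0 < ε) (hf : Continuous f)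
    (hf0 : ∀ x, 0 ≤ f x) (hfK : 0 < ∫ x in K, f x) :
    newtonEnergy K ε f ≤
      2 * ((d * unitBallVolume d + 1) * (∫ x in K, f x) ^ (2 / d : ℝ) *
        ∫ x in K, f x ^ (2 - 2 / d : ℝ)) := by
  have hd1 : 2 / (d : ℝ) ≤ 1 := div_le_one_of_le₀ (mod_cast hd) (by positivity)
  set C := (d * unitBallVolume d + 1) * (∫ x in K, f x) ^ (2 / d : ℝ)
  have hmin : Continuous fun y => ∫ x in K, min (f y) (f x) * newtonKernel ε (x - y) :=
    continuous_parametric_integral_of_continuous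
      (f := fun y x => min (f y) (f x) * newtonKernel ε (x - y))
      (((hf.comp continuous_fst).min (hf.comp continuous_snd)).mul
        (continuous_newtonKernel_sub hε)) hK
  have hpow : Continuous fun y => f y ^ (2 - 2 / d : ℝ) :=
    hf.rpow_const fun _ => Or.inr (by linarith)
  refine (newtonEnergy_le_setIntegral_min hK hε hf hf0).trans ?_
  rw [← integral_const_mul C]
  refine mul_le_mul_of_nonneg_left ?_ zero_le_two
  refine integral_mono ((hf.mul hmin).continuousOn.integrableOn_compact hK)
    ((continuous_const.mul hpow).continuousOn.integrableOn_compact hK) fun y => ?_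
  calc f y * ∫ x in K, min (f y) (f x) * newtonKernel ε (x - y)
      ≤ f y * (C * f y ^ (1 - 2 / d : ℝ)) := mul_le_mul_of_nonneg_left
        (setIntegral_min_mul_newtonKernel_le_rpow hd hK hε hf hf0 hfK (hf0 y) y) (hf0 y)
    _ = C * f y ^ (2 - 2 / d : ℝ) := by
        rw [show (2 - 2 / d : ℝ) = 1 + (1 - 2 / d) by ring,
          Real.rpow_one_add' (hf0 y) (by linarith), mul_left_comm]

end NewtonEnergy

/-! ### Energy dissipation -/

lemma sub_le_integral_of_slope_lt {f g : ℝ → ℝ} {a b : ℝ} (hab : a ≤ b)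
    (hf : ContinuousOn f (Icc a b)) (hg : Continuous g)
    (hslope : ∀ s ∈ Ico a b, ∀ r, g s < r → ∃ᶠ t in 𝓝[>] s, slope f s t < r) :
    f b - f a ≤ ∫ τ in a..b, g τ := by
  have hbound := image_le_of_liminf_slope_right_le_deriv_boundary hf
    (B := fun t => f a + ∫ τ in a..t, g τ) (by simp)
    (continuous_const.add (intervalIntegral.continuous_primitive
      (fun _ _ => hg.intervalIntegrable _ _) _)).continuousOn
    (fun s _ => ((hg.integral_hasStrictDerivAt a s).hasDerivAt.const_add _).hasDerivWithinAt)
    hslope (right_mem_Icc.2 hab)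
  linarith

/-- The dissipation `∫ U ^ (1 + m)` still to come between time `t` and the extinction time `T`. Its
decay is what forces extinction. -/
noncomputable def dissipationTail (m : ℝ) (K : Set (𝔼 d)) (T : ℝ) (U : ℝ → 𝔼 d → ℝ) (t : ℝ) : ℝ :=
  ∫ τ in t..T, ∫ x in K, U τ x ^ (1 + m)

/-- The constant in the bound of the dissipation tail by norms of the solution: the constant of
`newtonEnergy_le` divided by the dissipation rate of the energy. -/
noncomputable def energyConst (d : ℕ) : ℝ := (d * unitBallVolume d + 1) / newtonConst d

lemma energyConst_pos (hd : 2 < d) : 0 < energyConst d := by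
  have := unitBallVolume_pos d
  exact div_pos (by positivity) (newtonConst_pos hd)

namespace IsExtendedSol

variable {m T ε η a s t p : ℝ} {K : Set (𝔼 d)} {U : ℝ → 𝔼 d → ℝ} {y : 𝔼 d}

lemma continuous_setIntegral_rpow (h : IsExtendedSol m K T U) (hp : 0 ≤ p) :
    Continuous fun t => ∫ x in K, U t x ^ p :=
  continuous_parametric_integral_of_continuous (h.continuous_rpow hp) h.isCompact

lemma continuous_setIntegral (h : IsExtendedSol m K T U) : Continuous fun t => ∫ x in K, U t x :=
  continuous_parametric_integral_of_continuous h.continuous h.isCompact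

lemma exists_rpow_sub_le_rpow (h : IsExtendedSol m K T U) (hη : 0 < η) :
    ∃ ε > 0, ∀ s ∈ Icc 0 T, ∀ y ∈ K, ∀ τ ∈ Ico s (s + ε), ∀ x ∈ ball y ε,
      U s y ^ m - η ≤ U τ x ^ m := by
  have hunif := (isCompact_Icc.prod h.isCompact).uniformContinuousAt_of_continuousAt
    (s := Icc (0 : ℝ) T ×ˢ K) (fun p : ℝ × 𝔼 d => U p.1 p.2 ^ m)
    (fun p _ => (h.continuous_rpow h.exponent_pos.le).continuousAt) (Metric.dist_mem_uniformity hη)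
  obtain ⟨ε, hε, hclose⟩ := Metric.mem_uniformity_dist.1 hunif
  refine ⟨ε, hε, fun s hs y hy τ hτ x hx => ?_⟩
  have hdist : dist (s, y) (τ, x) < ε := by
    rw [Prod.dist_eq, max_lt_iff, dist_comm, Real.dist_eq, abs_of_nonneg (sub_nonneg.2 hτ.1)]
    exact ⟨by linarith [hτ.2], mem_ball'.1 hx⟩
  have hlt : dist (U s y ^ m) (U τ x ^ m) < η := hclose hdist ⟨hs, hy⟩
  rw [Real.dist_eq, abs_lt] at hlt
  linarith [hlt.2]

lemma newtonPotential_sub_le (h : IsExtendedSol m K T U) (hd : 2 ≤ d) (hε : 0 < ε) (hs : 0 ≤ s)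
    (hst : s ≤ t) (ht : t ≤ T) (ha : ∀ τ ∈ Icc s t, ∀ x ∈ ball y ε, a ≤ U τ x ^ m) :
    newtonPotential K ε (U t) y - newtonPotential K ε (U s) y ≤
      -(newtonConst d * a) * (t - s) := by
  have hφ : ContDiff ℝ 2 fun x => newtonKernel ε (x - y) :=
    (contDiff_newtonKernel hε).comp (contDiff_id.sub contDiff_const)
  calc _ ≤ ∫ τ in s..t, ∫ x in K, U τ x ^ m * spaceLap (fun x => newtonKernel ε (x - y)) x :=
        h.weak_ineq_of_nonneg hφ (fun x => newtonKernel_nonneg ε _) hs hst ht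
    _ ≤ ∫ _ in s..t, -(newtonConst d * a) :=
        intervalIntegral.integral_mono_on hst
          ((h.continuous_setIntegral_rpow_mul (continuous_spaceLap hφ)).intervalIntegrable _ _)
          intervalIntegrable_const fun τ hτ =>
            setIntegral_mul_spaceLap_newtonKernel_le hd h.isCompact
              (h.continuous_rpow_slice h.exponent_pos.le τ)
              (fun x => Real.rpow_nonneg (h.nonneg τ x) m)
              (fun x hx => h.rpow_eq_zero τ (notMem_subset interior_subset hx)) hε (ha τ hτ)
    _ = _ := by rw [intervalIntegral.integral_const, smul_eq_mul, mul_comm]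

lemma newtonEnergy_sub_le (h : IsExtendedSol m K T U) (hd : 2 ≤ d) (hε : 0 < ε) (hs : 0 ≤ s)
    (hst : s ≤ t) (ht : t ≤ T)
    (hclose : ∀ y ∈ K, ∀ τ ∈ Icc s t, ∀ x ∈ ball y ε, U s y ^ m - η ≤ U τ x ^ m) :
    newtonEnergy K ε (U t) - newtonEnergy K ε (U s) ≤
      -newtonConst d * (∫ y in K, (U t y + U s y) * (U s y ^ m - η)) * (t - s) := by
  have hsum := (h.continuous_slice t).add (h.continuous_slice s)
  rw [newtonEnergy_sub h.isCompact hε (h.continuous_slice s) (h.continuous_slice t),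
    mul_right_comm, ← integral_const_mul]
  refine setIntegral_mono_on
    ((hsum.mul ((continuous_newtonPotential h.isCompact hε (h.continuous_slice t)).sub
      (continuous_newtonPotential h.isCompact hε (h.continuous_slice s)))
      ).continuousOn.integrableOn_compact h.isCompact)
    ((continuous_const.mul (hsum.mul ((h.continuous_rpow_slice h.exponent_pos.le s).sub
      continuous_const))).continuousOn.integrableOn_compact h.isCompact)
    h.isCompact.measurableSet fun y hy => ?_
  have := mul_le_mul_of_nonneg_left (h.newtonPotential_sub_le hd hε hs hst ht (hclose y hy))
    (add_nonneg (h.nonneg t y) (h.nonneg s y))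
  linarith

lemma setIntegral_add_self_mul_rpow_sub (h : IsExtendedSol m K T U) (s η : ℝ) :
    ∫ y in K, (U s y + U s y) * (U s y ^ m - η) =
      2 * ((∫ y in K, U s y ^ (1 + m)) - η * ∫ y in K, U s y) := by
  have hm := h.exponent_pos
  have hexpand : ∀ y, (U s y + U s y) * (U s y ^ m - η) =
      2 * (U s y ^ (1 + m) - η * U s y) := fun y => by
    rw [Real.rpow_one_add' (h.nonneg s y) (by positivity)]
    ring
  simp only [hexpand]
  rw [integral_const_mul, integral_sub, integral_const_mul]
  · exact (h.continuous_rpow_slice (by positivity) s).continuousOn.integrableOn_compact h.isCompact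
  · exact (continuous_const.mul (h.continuous_slice s)).continuousOn.integrableOn_compact
      h.isCompact

lemma eventually_slope_newtonEnergy_lt (h : IsExtendedSol m K T U) (hd : 2 ≤ d) (hε : 0 < ε)
    (hs : s ∈ Ico 0 T)
    (hclose : ∀ y ∈ K, ∀ τ ∈ Ico s (s + ε), ∀ x ∈ ball y ε, U s y ^ m - η ≤ U τ x ^ m) {r : ℝ}
    (hr : -newtonConst d * (2 * ((∫ x in K, U s x ^ (1 + m)) - η * ∫ x in K, U s x)) < r) :
    ∀ᶠ t in 𝓝[>] s, slope (fun t => newtonEnergy K ε (U t)) s t < r := by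
  set Q : ℝ → ℝ := fun t => ∫ y in K, (U t y + U s y) * (U s y ^ m - η)
  have hQ : Continuous Q := continuous_setIntegral_mul
    (h.continuous.add ((h.continuous_slice s).comp continuous_snd))
    ((h.continuous_rpow_slice h.exponent_pos.le s).sub continuous_const) h.isCompact
  rw [← h.setIntegral_add_self_mul_rpow_sub s η] at hr
  have hQr : ∀ᶠ t in 𝓝[>] s, -newtonConst d * Q t < r :=
    ((continuous_const.mul hQ).continuousAt.eventually_lt_const hr).filter_mono nhdsWithin_le_nhds
  filter_upwards [hQr, Ioo_mem_nhdsGT (lt_min hs.2 (lt_add_of_pos_right s hε))] with t htr ht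
  obtain ⟨htT, htε⟩ := lt_min_iff.1 ht.2
  refine lt_of_le_of_lt ?_ htr
  rw [slope_def_field, div_le_iff₀ (sub_pos.2 ht.1)]
  exact h.newtonEnergy_sub_le hd hε hs.1 ht.1.le htT.le fun y hy τ hτ =>
    hclose y hy τ ⟨hτ.1, hτ.2.trans_lt htε⟩

lemma exists_integral_sub_le_newtonEnergy (h : IsExtendedSol m K T U) (hd : 2 ≤ d) (hη : 0 < η) :
    ∃ ε > 0, ∀ a ∈ Icc 0 T, 2 * newtonConst d *
      ∫ τ in a..T, ((∫ x in K, U τ x ^ (1 + m)) - η * ∫ x in K, U τ x) ≤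
        newtonEnergy K ε (U a) := by
  obtain ⟨ε, hε, hclose⟩ := h.exists_rpow_sub_le_rpow hη
  refine ⟨ε, hε, fun a ha => ?_⟩
  have henergy : Continuous fun t => newtonEnergy K ε (U t) :=
    continuous_parametric_integral_of_continuous
      (h.continuous.mul (continuous_newtonPotential_uncurry h.isCompact hε h.continuous))
      h.isCompact
  have hrate : Continuous fun τ => (∫ x in K, U τ x ^ (1 + m)) - η * ∫ x in K, U τ x :=
    (h.continuous_setIntegral_rpow (add_nonneg zero_le_one h.exponent_pos.le)).sub
      (continuous_const.mul h.continuous_setIntegral)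
  have hdrop := sub_le_integral_of_slope_lt ha.2 henergy.continuousOn
    (continuous_const.mul (continuous_const.mul hrate)) fun s hs r hr =>
      have hs' : s ∈ Ico 0 T := ⟨ha.1.trans hs.1, hs.2⟩
      (h.eventually_slope_newtonEnergy_lt hd hε hs' (hclose s (Ico_subset_Icc_self hs'))
        hr).frequently
  have hextinct : newtonEnergy K ε (U T) = 0 := by simp [newtonEnergy, h.extinct]
  simp only [hextinct, Pi.mul_apply, intervalIntegral.integral_const_mul] at hdrop
  linarith

lemma dissipationTail_le (h : IsExtendedSol m K T U) (hd : 2 < d) (ha : a ∈ Icc 0 T)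
    (hmass : 0 < ∫ x in K, U a x) :
    dissipationTail m K T U a ≤
      energyConst d * (∫ x in K, U a x) ^ (2 / d : ℝ) * ∫ x in K, U a x ^ (2 - 2 / d : ℝ) := by
  have hm := h.exponent_pos
  have hc := newtonConst_pos hd
  set B := energyConst d * (∫ x in K, U a x) ^ (2 / d : ℝ) * ∫ x in K, U a x ^ (2 - 2 / d : ℝ)
    with hB
  have happrox : ∀ η > 0,
      dissipationTail m K T U a ≤ B + η * ∫ τ in a..T, ∫ x in K, U τ x := fun η hη => by
    obtain ⟨ε, hε, hdrop⟩ := h.exists_integral_sub_le_newtonEnergy hd.le hη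
    have hle := (hdrop a ha).trans (newtonEnergy_le hd.le h.isCompact hε (h.continuous_slice a)
      (h.nonneg a) hmass)
    rw [intervalIntegral.integral_sub
      ((h.continuous_setIntegral_rpow (by positivity)).intervalIntegrable _ _)
      ((h.continuous_setIntegral.intervalIntegrable _ _).const_mul η),
      intervalIntegral.integral_const_mul, mul_assoc, mul_le_mul_iff_right₀ two_pos] at hle
    rw [hB, energyConst, div_mul_eq_mul_div, div_mul_eq_mul_div, ← sub_le_iff_le_add,
      le_div_iff₀ hc, dissipationTail]
    linarith
  have hlim : Tendsto (fun η => B + η * ∫ τ in a..T, ∫ x in K, U τ x) (𝓝[>] 0) (𝓝 _) :=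
    (Continuous.tendsto (by fun_prop) 0).mono_left nhdsWithin_le_nhds
  simpa using ge_of_tendsto hlim (eventually_nhdsWithin_of_forall happrox)

end IsExtendedSol

/-! ### Extinction for differential inequalities -/

section DifferentialInequality

variable {Γ Γ' : ℝ → ℝ}

lemma sub_le_of_deriv_le_neg_div_rpow {A α s t : ℝ} (hA : 0 < A) (hα : α ≠ 1) (hst : s ≤ t)
    (hcont : ContinuousOn (fun τ => Γ τ ^ (1 - α)) (Icc s t))
    (hderiv : ∀ τ ∈ Ioo s t, HasDerivAt Γ (Γ' τ) τ) (hpos : ∀ τ ∈ Ioo s t, 0 < Γ τ)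
    (hle : ∀ τ ∈ Ioo s t, Γ' τ ≤ -(Γ τ / A) ^ α) :
    t - s ≤ A ^ α * ((Γ s ^ (1 - α) - Γ t ^ (1 - α)) / (1 - α)) := by
  have hα' : 1 - α ≠ 0 := sub_ne_zero.2 hα.symm
  set Φ : ℝ → ℝ := fun τ => A ^ α * (Γ τ ^ (1 - α) / (1 - α)) + τ
  have hΦ : ContinuousOn Φ (Icc s t) :=
    (continuousOn_const.mul (hcont.div_const _)).add continuousOn_id
  have hΦ' : ∀ τ ∈ Ioo s t, HasDerivAt Φ (A ^ α * (Γ' τ * Γ τ ^ (-α)) + 1) τ := fun τ hτ => by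
    have hpow := ((hderiv τ hτ).rpow_const (p := 1 - α) (Or.inl (hpos τ hτ).ne')).div_const (1 - α)
    rw [show 1 - α - 1 = -α by ring, mul_right_comm, mul_div_cancel_right₀ _ hα'] at hpow
    exact (hpow.const_mul _).add (hasDerivAt_id τ)
  have hanti : AntitoneOn Φ (Icc s t) := by
    refine antitoneOn_of_deriv_nonpos (convex_Icc s t) hΦ ?_ ?_ <;> rw [interior_Icc]
    · exact fun τ hτ => (hΦ' τ hτ).differentiableAt.differentiableWithinAt
    · intro τ hτ
      have hΓ := hpos τ hτ
      have hcancel : (Γ τ / A) ^ α * (A ^ α * Γ τ ^ (-α)) = 1 := by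
        rw [Real.div_rpow hΓ.le hA.le, Real.rpow_neg hΓ.le]
        field_simp
      have := mul_le_mul_of_nonneg_right (hle τ hτ) (show 0 ≤ A ^ α * Γ τ ^ (-α) by positivity)
      rw [(hΦ' τ hτ).deriv]
      linarith
  have hends := hanti (left_mem_Icc.2 hst) (right_mem_Icc.2 hst) hst
  rw [sub_div, mul_sub]
  linarith

lemma exists_le_and_eq_zero_or_eq {T g : ℝ} (hT : 0 < T) (hg : 0 < g)
    (hΓ : ContinuousOn Γ (Icc 0 T)) (hΓT : Γ T = 0) :
    ∃ t ∈ Ico 0 T, Γ t ≤ g ∧ (t = 0 ∨ Γ t = g) := by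
  rcases le_total (Γ 0) g with hsmall | hlarge
  · exact ⟨0, left_mem_Ico.2 hT, hsmall, Or.inl rfl⟩
  · obtain ⟨t, ht, hgt⟩ := intermediate_value_Icc' hT.le hΓ ⟨hΓT.trans_le hg.le, hlarge⟩
    have htT : t ≠ T := by
      rintro rfl
      exact hg.ne (hΓT.symm.trans hgt)
    exact ⟨t, ⟨ht.1, lt_of_le_of_ne ht.2 htT⟩, hgt.le, Or.inr hgt⟩

/-- The superlinear inequality brings `Γ` from any size down to `g` in bounded time, the sublinear
one takes it from `g` to zero. -/
lemma extinction_le_of_deriv_le {T g α β A B : ℝ} (hT : 0 < T) (hg : 0 < g) (hα : 1 < α)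
    (hβ : β < 1) (hA : 0 < A) (hB : 0 < B) (hΓ : ContinuousOn Γ (Icc 0 T)) (hΓT : Γ T = 0)
    (hpos : ∀ τ ∈ Ico 0 T, 0 < Γ τ) (hderiv : ∀ τ ∈ Ioo 0 T, HasDerivAt Γ (Γ' τ) τ)
    (hsuper : ∀ τ ∈ Ioo 0 T, Γ' τ ≤ -(Γ τ / A) ^ α)
    (hsub : ∀ τ ∈ Ioo 0 T, Γ' τ ≤ -(Γ τ / B) ^ β) :
    T ≤ A ^ α * g ^ (1 - α) / (α - 1) + B ^ β * g ^ (1 - β) / (1 - β) := by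
  have : 0 < α - 1 := sub_pos.2 hα
  have hβ' : 0 < 1 - β := sub_pos.2 hβ
  obtain ⟨t, ht, htg, htcase⟩ := exists_le_and_eq_zero_or_eq hT hg hΓ hΓT
  have hΓt := hpos t ht
  have hleft : Ioo 0 t ⊆ Ioo 0 T := Ioo_subset_Ioo_right ht.2.le
  have hright : Ioo t T ⊆ Ioo 0 T := Ioo_subset_Ioo_left ht.1
  have hfirst : t ≤ A ^ α * g ^ (1 - α) / (α - 1) := by
    rcases htcase with rfl | hgt
    · positivity
    have hphase := sub_le_of_deriv_le_neg_div_rpow hA hα.ne' ht.1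
      ((hΓ.mono (Icc_subset_Icc_right ht.2.le)).rpow_const fun τ hτ =>
        Or.inl (hpos τ ⟨hτ.1, hτ.2.trans_lt ht.2⟩).ne')
      (fun τ hτ => hderiv τ (hleft hτ)) (fun τ hτ => hpos τ (Ioo_subset_Ico_self (hleft hτ)))
      fun τ hτ => hsuper τ (hleft hτ)
    have hΓ0 : 0 ≤ Γ 0 ^ (1 - α) := Real.rpow_nonneg (hpos 0 (left_mem_Ico.2 hT)).le _
    rw [hgt, ← neg_sub α 1, ← neg_div_neg_eq, neg_neg, neg_sub, sub_zero, ← mul_div_assoc] at hphase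
    refine hphase.trans ?_
    rw [neg_sub]
    gcongr
    linarith
  have hsecond : T - t ≤ B ^ β * g ^ (1 - β) / (1 - β) := by
    have hphase := sub_le_of_deriv_le_neg_div_rpow hB hβ.ne ht.2.le
      ((hΓ.mono (Icc_subset_Icc_left ht.1)).rpow_const fun _ _ => Or.inr hβ'.le)
      (fun τ hτ => hderiv τ (hright hτ)) (fun τ hτ => hpos τ (Ioo_subset_Ico_self (hright hτ)))
      fun τ hτ => hsub τ (hright hτ)
    rw [hΓT, Real.zero_rpow hβ'.ne', sub_zero, ← mul_div_assoc] at hphase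
    refine hphase.trans ?_
    gcongr
  linarith

end DifferentialInequality

/-! ### The upper bound -/

lemma div_rpow_le_of_le_mul_rpow {G A Y b : ℝ} (hG : 0 ≤ G) (hA : 0 < A) (hY : 0 ≤ Y) (hb : 0 < b)
    (hle : G ≤ A * Y ^ b) : (G / A) ^ b⁻¹ ≤ Y := by
  rw [Real.rpow_inv_le_iff_of_pos (by positivity) hY hb, div_le_iff₀' hA]
  exact hle

/-- The exponent `θ` for which `2 - 2 / d = (1 - θ) * 1 + θ * (1 + m)`. -/
noncomputable def interpolationExponent (d : ℕ) (m : ℝ) : ℝ := (1 - 2 / d) / m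

/-- The power of the mass left in the bound of the dissipation tail once `∫ U ^ (2 - 2 / d)` is
interpolated between the mass and the dissipation. -/
noncomputable def massExponent (d : ℕ) (m : ℝ) : ℝ := 2 / d + (1 - interpolationExponent d m)

lemma interpolationExponent_mem_Ioo {m : ℝ} (hd : 2 < d) (hmc : 1 - 2 / d < m) :
    interpolationExponent d m ∈ Ioo 0 1 := by
  have hd1 : (0 : ℝ) < 1 - 2 / d :=
    sub_pos.2 ((div_lt_one (by positivity)).2 (by exact_mod_cast hd))
  have hm := hd1.trans hmc
  exact ⟨div_pos hd1 hm, (div_lt_one hm).2 hmc⟩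

lemma massExponent_pos {m : ℝ} (hd : 2 < d) (hmc : 1 - 2 / d < m) : 0 < massExponent d m :=
  add_pos (by positivity) (sub_pos.2 (interpolationExponent_mem_Ioo hd hmc).2)

namespace IsExtendedSol

variable {m T t p : ℝ} {K : Set (𝔼 d)} {U : ℝ → 𝔼 d → ℝ}

lemma integrableOn_rpow (h : IsExtendedSol m K T U) (hp : 0 ≤ p) (t : ℝ) :
    IntegrableOn (fun x => U t x ^ p) K :=
  (h.continuous_rpow_slice hp t).continuousOn.integrableOn_compact h.isCompact

lemma setIntegral_rpow_pos (h : IsExtendedSol m K T U) (hK : (interior K).Nonempty)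
    (ht : t ∈ Ioo 0 T) (hp : 0 ≤ p) : 0 < ∫ x in K, U t x ^ p := by
  rw [setIntegral_pos_iff_support_of_nonneg_ae
    (ae_of_all _ fun x => Real.rpow_nonneg (h.nonneg t x) p) (h.integrableOn_rpow hp t)]
  exact (isOpen_interior.measure_pos volume hK).trans_le <| measure_mono fun x hx =>
    ⟨(Real.rpow_pos_of_pos (h.pos t ht x hx) p).ne', interior_subset hx⟩

lemma mass_pos (h : IsExtendedSol m K T U) (hK : (interior K).Nonempty) (ht : t ∈ Ioo 0 T) :
    0 < ∫ x in K, U t x := by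
  simpa only [Real.rpow_one] using h.setIntegral_rpow_pos hK ht zero_le_one

lemma initial_mass_pos (h : IsExtendedSol m K T U) (hK : (interior K).Nonempty) :
    0 < ∫ x in K, U 0 x := by
  have hT := h.time_pos
  have hmid : T / 2 ∈ Ioo 0 T := ⟨by positivity, by linarith⟩
  exact (h.mass_pos hK hmid).trans_le (h.mass_le hmid.1.le hmid.2.le)

lemma hasDerivAt_dissipationTail (h : IsExtendedSol m K T U) (t : ℝ) :
    HasDerivAt (dissipationTail m K T U) (-∫ x in K, U t x ^ (1 + m)) t := by
  have hcont := h.continuous_setIntegral_rpow (add_nonneg zero_le_one h.exponent_pos.le)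
  exact intervalIntegral.integral_hasDerivAt_left (hcont.intervalIntegrable _ _)
    (hcont.stronglyMeasurableAtFilter _ _) hcont.continuousAt

lemma dissipationTail_pos (h : IsExtendedSol m K T U) (hK : (interior K).Nonempty)
    (ht : t ∈ Ico 0 T) : 0 < dissipationTail m K T U t := by
  have hm := add_nonneg zero_le_one h.exponent_pos.le
  exact intervalIntegral.intervalIntegral_pos_of_pos_on
    ((h.continuous_setIntegral_rpow hm).intervalIntegrable _ _)
    (fun τ hτ => h.setIntegral_rpow_pos hK ⟨ht.1.trans_lt hτ.1, hτ.2⟩ hm) ht.2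

lemma setIntegral_le_rpow_mul_rpow (h : IsExtendedSol m K T U) (t : ℝ) :
    ∫ x in K, U t x ≤
      volume.real K ^ (m / (1 + m)) * (∫ x in K, U t x ^ (1 + m)) ^ (1 / (1 + m)) := by
  have hm := h.exponent_pos
  have hroot : ∀ x, (U t x ^ (1 + m)) ^ (1 / (1 + m)) = U t x := fun x => by
    rw [one_div, Real.rpow_rpow_inv (h.nonneg t x) (by positivity)]
  have hle := setIntegral_rpow_le (θ := 1 / (1 + m))
    (fun x => Real.rpow_nonneg (h.nonneg t x) (1 + m))
    h.isCompact.measure_lt_top.ne (h.integrableOn_rpow (by positivity) t)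
    ⟨by positivity, by rw [div_lt_one] <;> linarith⟩
  simp only [hroot] at hle
  rwa [show 1 - 1 / (1 + m) = m / (1 + m) by field_simp; ring] at hle

lemma dissipationTail_le_mass_mul (h : IsExtendedSol m K T U) (hd : 2 < d) (hmc : 1 - 2 / d < m)
    (ht : t ∈ Icc 0 T) (hmass : 0 < ∫ x in K, U t x) :
    dissipationTail m K T U t ≤ energyConst d * (∫ x in K, U t x) ^ massExponent d m *
      (∫ x in K, U t x ^ (1 + m)) ^ interpolationExponent d m := by
  have hm := h.exponent_pos
  have hC := energyConst_pos hd
  set θ := interpolationExponent d m with hθ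
  have hinterp := integral_rpow_le_interpolate (μ := volume.restrict K) (h.nonneg t) zero_le_one
    (c := 1 + m) (by positivity) (h.integrableOn_rpow zero_le_one t)
    (h.integrableOn_rpow (by positivity) t) (interpolationExponent_mem_Ioo hd hmc)
    (b := 2 - 2 / d) (by rw [interpolationExponent]; field_simp; ring)
  simp only [Real.rpow_one] at hinterp
  calc dissipationTail m K T U t
      ≤ energyConst d * (∫ x in K, U t x) ^ (2 / d : ℝ) * ∫ x in K, U t x ^ (2 - 2 / d : ℝ) :=
        h.dissipationTail_le hd ht hmass
    _ ≤ energyConst d * (∫ x in K, U t x) ^ (2 / d : ℝ) *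
          ((∫ x in K, U t x) ^ (1 - θ) * (∫ x in K, U t x ^ (1 + m)) ^ θ) := by gcongr
    _ = _ := by
        rw [massExponent, ← hθ, Real.rpow_add hmass]
        ring

lemma dissipationTail_le_initial_mass_mul (h : IsExtendedSol m K T U) (hd : 2 < d)
    (hmc : 1 - 2 / d < m) (hK : (interior K).Nonempty) (ht : t ∈ Ioo 0 T) :
    dissipationTail m K T U t ≤ energyConst d * (∫ x in K, U 0 x) ^ massExponent d m *
      (∫ x in K, U t x ^ (1 + m)) ^ interpolationExponent d m := by
  have hC := energyConst_pos hd
  have hmass := h.mass_pos hK ht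
  have hY := h.setIntegral_rpow_pos hK ht (add_nonneg zero_le_one h.exponent_pos.le)
  refine (h.dissipationTail_le_mass_mul hd hmc (Ioo_subset_Icc_self ht) hmass).trans ?_
  have := Real.rpow_le_rpow hmass.le (h.mass_le ht.1.le ht.2.le) (massExponent_pos hd hmc).le
  gcongr

lemma dissipationTail_le_volume_mul (h : IsExtendedSol m K T U) (hd : 2 < d)
    (hmc : 1 - 2 / d < m) (hK : (interior K).Nonempty) (ht : t ∈ Ioo 0 T) :
    dissipationTail m K T U t ≤
      energyConst d * volume.real K ^ (massExponent d m * m / (1 + m)) *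
        (∫ x in K, U t x ^ (1 + m)) ^ (2 / (1 + m)) := by
  have hm := h.exponent_pos
  have hC := energyConst_pos hd
  have hmass := h.mass_pos hK ht
  have hY := h.setIntegral_rpow_pos hK ht (add_nonneg zero_le_one hm.le)
  have hq := massExponent_pos hd hmc
  set Y := ∫ x in K, U t x ^ (1 + m)
  have hexponent : 2 / (1 + m) =
      1 / (1 + m) * massExponent d m + interpolationExponent d m := by
    rw [massExponent, interpolationExponent]
    field_simp
    ring
  calc dissipationTail m K T U t
      ≤ energyConst d * (∫ x in K, U t x) ^ massExponent d m * Y ^ interpolationExponent d m :=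
        h.dissipationTail_le_mass_mul hd hmc (Ioo_subset_Icc_self ht) hmass
    _ ≤ energyConst d * (volume.real K ^ (m / (1 + m)) * Y ^ (1 / (1 + m))) ^ massExponent d m *
          Y ^ interpolationExponent d m := by
        gcongr
        exact h.setIntegral_le_rpow_mul_rpow t
    _ = _ := by
        rw [Real.mul_rpow (by positivity) (by positivity), ← Real.rpow_mul (by positivity),
          ← Real.rpow_mul hY.le, hexponent, Real.rpow_add hY, mul_comm (massExponent d m) m,
          mul_div_right_comm]
        ring

end IsExtendedSol

/-- The constant of the upper bound: the two summands are the durations of the superlinear and of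
the sublinear phase for unit mass and unit volume. -/
noncomputable def upperConst (d : ℕ) (m : ℝ) : ℝ :=
  energyConst d ^ (interpolationExponent d m)⁻¹ / ((interpolationExponent d m)⁻¹ - 1) +
    energyConst d ^ (2 / (1 + m))⁻¹ / (1 - (2 / (1 + m))⁻¹)

lemma inv_two_div_one_add_lt_one {m : ℝ} (hm1 : m < 1) : (2 / (1 + m))⁻¹ < 1 := by
  rw [inv_div]
  linarith

lemma upperConst_pos {m : ℝ} (hd : 2 < d) (hmc : 1 - 2 / d < m) (hm1 : m < 1) :
    0 < upperConst d m := by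
  obtain ⟨hθ0, hθ1⟩ := interpolationExponent_mem_Ioo hd hmc
  have hC := energyConst_pos hd
  exact add_pos (div_pos (by positivity) (sub_pos.2 ((one_lt_inv₀ hθ0).2 hθ1)))
    (div_pos (by positivity) (sub_pos.2 (inv_two_div_one_add_lt_one hm1)))

lemma superlinearPhase_eq {m C M V : ℝ} (hd : 2 < d) (hmc : 1 - 2 / d < m) (hC : 0 ≤ C)
    (hM : 0 < M) (hV : 0 < V) :
    (C * M ^ massExponent d m) ^ (interpolationExponent d m)⁻¹ *
        (M ^ (2 : ℝ) * V ^ (2 / d - 1 : ℝ)) ^ (1 - (interpolationExponent d m)⁻¹) =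
      C ^ (interpolationExponent d m)⁻¹ * (M ^ (1 - m) * V ^ (2 / d - (1 - m))) := by
  have hd1 : (1 - 2 / d : ℝ) ≠ 0 :=
    (sub_pos.2 ((div_lt_one (by positivity)).2 (by exact_mod_cast hd))).ne'
  have hθ := (interpolationExponent_mem_Ioo hd hmc).1.ne'
  set θ := interpolationExponent d m with hθdef
  have hθm : (1 - 2 / d) * θ⁻¹ = m := by
    rw [hθdef, interpolationExponent, inv_div, mul_div_cancel₀ _ hd1]
  have hMexp : 1 - m = massExponent d m * θ⁻¹ + 2 * (1 - θ⁻¹) := by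
    rw [massExponent, ← hθdef]
    linear_combination hθm + mul_inv_cancel₀ hθ
  have hVexp : 2 / d - (1 - m) = (2 / d - 1) * (1 - θ⁻¹) := by linear_combination -hθm
  rw [Real.mul_rpow hC (by positivity), Real.mul_rpow (by positivity) (by positivity),
    ← Real.rpow_mul hM.le, ← Real.rpow_mul hM.le, ← Real.rpow_mul hV.le, hVexp, hMexp,
    Real.rpow_add hM]
  ring

lemma sublinearPhase_eq {m C M V : ℝ} (hm : 0 < m) (hC : 0 ≤ C) (hM : 0 < M) (hV : 0 < V) :
    (C * V ^ (massExponent d m * m / (1 + m))) ^ (2 / (1 + m))⁻¹ *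
        (M ^ (2 : ℝ) * V ^ (2 / d - 1 : ℝ)) ^ (1 - (2 / (1 + m))⁻¹) =
      C ^ (2 / (1 + m))⁻¹ * (M ^ (1 - m) * V ^ (2 / d - (1 - m))) := by
  have hMexp : 1 - m = 2 * (1 - (2 / (1 + m))⁻¹) := by
    field_simp
    ring
  have hVexp : 2 / d - (1 - m) =
      massExponent d m * m / (1 + m) * (2 / (1 + m))⁻¹ +
        (2 / d - 1) * (1 - (2 / (1 + m))⁻¹) := by
    rw [massExponent, interpolationExponent]
    field_simp
    ring
  rw [Real.mul_rpow hC (by positivity), Real.mul_rpow (by positivity) (by positivity),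
    ← Real.rpow_mul hM.le, ← Real.rpow_mul hV.le, ← Real.rpow_mul hV.le, hVexp,
    Real.rpow_add hV, hMexp]
  ring

/-- At the threshold `M ^ 2 * V ^ (2 / d - 1)`, with `M` the initial mass and `V` the volume, both
phases last a multiple of `M ^ (1 - m) * V ^ (2 / d - (1 - m))`. -/
theorem IsExtendedSol.extinctionTime_le {m T : ℝ} {K : Set (𝔼 d)} {U : ℝ → 𝔼 d → ℝ}
    (h : IsExtendedSol m K T U) (hd : 2 < d) (hmc : 1 - 2 / d < m) (hm1 : m < 1)
    (hK : (interior K).Nonempty) :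
    T ≤ upperConst d m * (∫ x in K, U 0 x) ^ (1 - m) * volume.real K ^ (2 / d - (1 - m)) := by
  have hm := h.exponent_pos
  have hC := energyConst_pos hd
  have hM := h.initial_mass_pos hK
  have hV : 0 < volume.real K := ENNReal.toReal_pos
    ((isOpen_interior.measure_pos volume hK).trans_le (measure_mono interior_subset)).ne'
    h.isCompact.measure_lt_top.ne
  obtain ⟨hθ0, hθ1⟩ := interpolationExponent_mem_Ioo hd hmc
  have hY : ∀ t ∈ Ioo 0 T, 0 ≤ ∫ x in K, U t x ^ (1 + m) := fun t ht =>
    (h.setIntegral_rpow_pos hK ht (by positivity)).le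
  have hG : ∀ t ∈ Ioo 0 T, 0 ≤ dissipationTail m K T U t := fun t ht =>
    (h.dissipationTail_pos hK (Ioo_subset_Ico_self ht)).le
  have htime := extinction_le_of_deriv_le h.time_pos
    (g := (∫ x in K, U 0 x) ^ (2 : ℝ) * volume.real K ^ (2 / d - 1 : ℝ))
    (by positivity) ((one_lt_inv₀ hθ0).2 hθ1) (inv_two_div_one_add_lt_one hm1)
    (A := energyConst d * (∫ x in K, U 0 x) ^ massExponent d m) (by positivity)
    (B := energyConst d * volume.real K ^ (massExponent d m * m / (1 + m))) (by positivity)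
    (fun t _ => (h.hasDerivAt_dissipationTail t).continuousAt.continuousWithinAt)
    intervalIntegral.integral_same (fun t ht => h.dissipationTail_pos hK ht)
    (fun t _ => h.hasDerivAt_dissipationTail t)
    (fun t ht => neg_le_neg (div_rpow_le_of_le_mul_rpow (hG t ht) (by positivity) (hY t ht) hθ0
      (h.dissipationTail_le_initial_mass_mul hd hmc hK ht)))
    fun t ht => neg_le_neg (div_rpow_le_of_le_mul_rpow (hG t ht) (by positivity) (hY t ht)
      (by positivity) (h.dissipationTail_le_volume_mul hd hmc hK ht))
  rw [superlinearPhase_eq hd hmc hC.le hM hV, sublinearPhase_eq hm hC.le hM hV] at htime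
  refine htime.trans_eq ?_
  rw [upperConst]
  ring

theorem IsExtendedSol.extinctionTime_le_ball {m R T : ℝ} {x₀ : 𝔼 d} {U : ℝ → 𝔼 d → ℝ}
    (h : IsExtendedSol m (closedBall x₀ R) T U) (hd : 2 < d) (hmc : 1 - 2 / d < m) (hm1 : m < 1)
    (hR : 0 < R) :
    T ≤ upperConst d m * unitBallVolume d ^ (2 / d - (1 - m)) *
      (∫ x in ball x₀ R, U 0 x) ^ (1 - m) * R ^ (2 - d * (1 - m)) := by
  have hexp : (d : ℝ) * (2 / d - (1 - m)) = 2 - d * (1 - m) := by field_simp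
  have hinterior := interior_closedBall x₀ hR.ne'
  have hmass : ∫ x in closedBall x₀ R, U 0 x = ∫ x in ball x₀ R, U 0 x :=
    setIntegral_eq_of_subset_of_forall_sdiff_eq_zero measurableSet_closedBall
      ball_subset_closedBall fun x hx => h.eq_zero 0 x (hinterior ▸ hx.2)
  have hle := h.extinctionTime_le hd hmc hm1 (hinterior ▸ nonempty_ball.2 hR)
  rw [volume_real_closedBall_rpow x₀ hR.le, hexp, hmass] at hle
  exact hle.trans_eq (by ring)

end

/-- **Theorem 1.3(i): sharp two-sided bounds for the extinction time in the good
fast diffusion range.** -/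
theorem extinction_time_two_sided_bounds
    (d : ℕ) (hd : 3 ≤ d) (m : ℝ) (hmc : (d - 2 : ℝ) / d < m) (hm1 : m < 1) :
    ∃ c₁ c₂ : ℝ, 0 < c₁ ∧ 0 < c₂ ∧
      ∀ (x₀ : EuclideanSpace ℝ (Fin d)) (R T : ℝ), 0 < R → 0 < T →
      ∀ (u : ℝ → EuclideanSpace ℝ (Fin d) → ℝ) (u₀ : EuclideanSpace ℝ (Fin d) → ℝ),
        IsDirichletSol m x₀ R T u u₀ →
        (∀ x ∈ ball x₀ R, 0 ≤ u₀ x) →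
        IntegrableOn u₀ (ball x₀ R) →
        (∃ x ∈ ball x₀ R, u₀ x ≠ 0) →
        c₁ * (∫ x in ball x₀ (R / 3), u₀ x) ^ (1 - m) * R ^ (2 - d * (1 - m)) ≤ T ∧
        T ≤ c₂ * (∫ x in ball x₀ R, u₀ x) ^ (1 - m) * R ^ (2 - d * (1 - m)) := by
  have hd2 : 2 < d := hd
  have hmc' : 1 - 2 / d < m := by rwa [sub_div, div_self (by positivity)] at hmc
  have hm : 0 < m := (sub_pos.2 ((div_lt_one (by positivity)).2 (by exact_mod_cast hd2))).trans hmc'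
  obtain ⟨c₁, hc₁, hlower⟩ := exists_mul_rpow_le_extinctionTime d hm hm1
  refine ⟨c₁, upperConst d m * unitBallVolume d ^ (2 / d - (1 - m)), hc₁,
    mul_pos (upperConst_pos hd2 hmc' hm1) (Real.rpow_pos_of_pos (unitBallVolume_pos d) _),
    fun x₀ R T hR hT u u₀ h _ _ _ => ?_⟩
  have hsol := h.isExtendedSol_zeroExtension hm hR hT
  rw [← h.setIntegral_zeroExtension_initial hT.le measurableSet_ball subset_rfl,
    ← h.setIntegral_zeroExtension_initial hT.le measurableSet_ball
      (ball_subset_ball (div_le_self hR.le (by norm_num)))]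
  exact ⟨hlower x₀ R T _ hR hsol, hsol.extinctionTime_le_ball hd2 hmc' hm1 hR⟩
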